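/- arXiv:1606.01191 — 9 statements merged into one kernel-verified Lean document; each statement's English description precedes it below -/
import Mathlib

section
/- Let λ: λ_1 ≥ … ≥ λ_n be a non-increasing sequence of real numbers and let μ = (μ_1, …, μ_n) ∈ ℝ^n be such that λ majorizes μ. Then there exists a unique Gelfand–Tsetlin pattern P: λ^1, …, λ^n with bounding sequence λ^n = λ and weight μ satisfying the following: for every j with 1 ≤ j ≤ n, the j-th row λ^j of P majorizes the j-th row κ^j of any Gelfand–Tsetlin pattern with bounding sequence λ and weight μ. -/
/-!
The idea is to describe a row by its partial sums. If `p m` is the sum of the first `m` entries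
of row `j + 1` of a pattern of weight `mu`, then interlacing bounds the sum of the first `m` entries
of row `j` by `min (p m) (p (m + 1) - mu (j + 1))`. The operator
`p ↦ (m ↦ min (p m) (p (m + 1) - mu (j + 1)))` is monotone, so iterating it from the partial sums
of `lam` gives functions `greedy` that bound the partial sums of every admissible pattern
(`partial_le_greedy`).

These bounds are attained by a single pattern, whose entries are the successive differences of
`greedy`. The operator preserves concavity and turns a concave `p` into one whose differences
interlace those of `p` (`min_shift_interlace`). The hypothesis that `lam` majorizes `mu` says that
`p (#B) ≥ ∑ i ∈ B, mu i`, with equality at the full index set, and this too is preserved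
(`sum_le_greedy`, `greedy_top`); it forces the row sums, hence the weight, to be right.
Uniqueness holds because two non-increasing rows majorizing each other have the same partial sums.
-/

open Finset

/-- `x` is non-increasing on the indices `1, …, n`. -/
def NonIncr (n : ℕ) (x : ℕ → ℝ) : Prop :=
  ∀ i, 1 ≤ i → i + 1 ≤ n → x (i + 1) ≤ x i

/-- `x` (viewed as a sequence indexed by `1, …, n`) majorizes `y`:
for every `k ≤ n` the sum of the `k` largest entries of `x` is at least the sum of the `k`
largest entries of `y` (expressed here by saying that every `k`-element partial sum of `y`
is dominated by some `k`-element partial sum of `x`), and the total sums agree. -/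
def Maj (n : ℕ) (x y : ℕ → ℝ) : Prop :=
  (∀ B : Finset ℕ, B ⊆ Finset.Icc 1 n →
    ∃ A : Finset ℕ, A ⊆ Finset.Icc 1 n ∧ A.card = B.card ∧
      ∑ i ∈ B, y i ≤ ∑ i ∈ A, x i) ∧
  ∑ i ∈ Finset.Icc 1 n, x i = ∑ i ∈ Finset.Icc 1 n, y i

/-- The sequence `lam` of length `n` and the sequence `mu` of length `n - 1` interlace:
`lam i ≥ mu i ≥ lam (i+1)` for `1 ≤ i ≤ n - 1`. -/
def Interlaces (n : ℕ) (lam mu : ℕ → ℝ) : Prop :=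
  ∀ i, 1 ≤ i → i + 1 ≤ n → mu i ≤ lam i ∧ lam (i + 1) ≤ mu i

/-- A Gelfand–Tsetlin pattern of size `n`: `L j i` is the `i`-th entry (`1 ≤ i ≤ j`) of
row `j` (`1 ≤ j ≤ n`); each row is non-increasing and row `j` interlaces row `j + 1`. -/
def IsGTPattern (n : ℕ) (L : ℕ → ℕ → ℝ) : Prop :=
  (∀ j, 1 ≤ j → j ≤ n → NonIncr j (L j)) ∧
  (∀ j, 1 ≤ j → j + 1 ≤ n → Interlaces (j + 1) (L (j + 1)) (L j))

/-- Sum of the entries of row `j` of a pattern. -/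
def rowSum (L : ℕ → ℕ → ℝ) (j : ℕ) : ℝ := ∑ i ∈ Finset.Icc 1 j, L j i

/-- The pattern `L` (of size `n`) has weight `mu`. -/
def HasWeight (n : ℕ) (L : ℕ → ℕ → ℝ) (mu : ℕ → ℝ) : Prop :=
  ∀ j, 1 ≤ j → j ≤ n → rowSum L j - rowSum L (j - 1) = mu j

/-- The pattern `L` (of size `n`) has bounding sequence `lam`. -/
def HasBounding (n : ℕ) (L : ℕ → ℕ → ℝ) (lam : ℕ → ℝ) : Prop :=
  ∀ i, 1 ≤ i → i ≤ n → L n i = lam i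

/-- `lam` (length `n`) weakly interlaces `mu` (length `n - 1`): for every nonempty subset
`S` of `{1, …, n-1}` of cardinality `j`, `lam 1 + ⋯ + lam j ≥ ∑_{i ∈ S} mu i ≥
lam (n-j+1) + ⋯ + lam n`. -/
def WeaklyInterlaces (n : ℕ) (lam mu : ℕ → ℝ) : Prop :=
  ∀ S : Finset ℕ, S ⊆ Finset.Icc 1 (n - 1) → S.Nonempty →
    ∑ i ∈ S, mu i ≤ ∑ i ∈ Finset.Icc 1 S.card, lam i ∧
    ∑ i ∈ Finset.Icc (n - S.card + 1) n, lam i ≤ ∑ i ∈ S, mu i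

/-- Triangular area of an interlacing pair (`lam` of length `n`, `mu` of length `n-1`). -/
def triArea (n : ℕ) (lam mu : ℕ → ℝ) : ℝ :=
  ∑ i ∈ Finset.Icc 1 (n - 1), (lam i - mu i) * (mu i - lam (i + 1))

/-- Trapezoidal area of an interlacing pair (`lam` of length `n`, `mu` of length `n-1`). -/
def trapArea (n : ℕ) (lam mu : ℕ → ℝ) : ℝ :=
  ∑ i ∈ Finset.Icc 1 (n - 1), ∑ j ∈ Finset.Icc i (n - 1),
    (lam i - mu i) * (mu j - lam (j + 1))

/-- Triangular area of a pattern of size `n`. -/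
def patTriArea (n : ℕ) (L : ℕ → ℕ → ℝ) : ℝ :=
  ∑ j ∈ Finset.Icc 1 (n - 1), triArea (j + 1) (L (j + 1)) (L j)

/-- Trapezoidal area of a pattern of size `n`. -/
def patTrapArea (n : ℕ) (L : ℕ → ℕ → ℝ) : ℝ :=
  ∑ j ∈ Finset.Icc 1 (n - 1), trapArea (j + 1) (L (j + 1)) (L j)

/-- `‖x‖²` for a sequence indexed by `1, …, n`. -/
def normSq (n : ℕ) (x : ℕ → ℝ) : ℝ := ∑ i ∈ Finset.Icc 1 n, (x i) ^ 2

/-- All entries `x 1, …, x n` are integers. -/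
def IsIntegralSeq (n : ℕ) (x : ℕ → ℝ) : Prop :=
  ∀ i, 1 ≤ i → i ≤ n → ∃ z : ℤ, x i = (z : ℝ)

/-! ### Initial sums of non-increasing sequences -/

lemma NonIncr.le {n : ℕ} {x : ℕ → ℝ} (h : NonIncr n x) {a b : ℕ} (ha : 1 ≤ a) (hab : a ≤ b)
    (hb : b ≤ n) : x b ≤ x a := by
  induction b, hab using Nat.le_induction with
  | base => exact le_rfl
  | succ b hab ih => exact (h b (by omega) hb).trans (ih (by omega))

/-- In a non-increasing sequence the first `k` entries have the largest sum among all
`k`-element sets of entries. -/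
lemma NonIncr.sum_le {n : ℕ} {x : ℕ → ℝ} (h : NonIncr n x) {B : Finset ℕ}
    (hB : B ⊆ Finset.Icc 1 n) : ∑ i ∈ B, x i ≤ ∑ i ∈ Finset.Icc 1 B.card, x i := by
  induction n generalizing B with
  | zero =>
    have hB0 : B = ∅ := by simpa using hB
    simp [hB0]
  | succ n ih =>
    have hn : NonIncr n x := fun i h1 h2 => h i h1 (by omega)
    by_cases hmem : n + 1 ∈ B
    · have hsub : B.erase (n + 1) ⊆ Finset.Icc 1 n := by
        intro i hi
        have h1 := Finset.mem_erase.mp hi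
        have h2 := Finset.mem_Icc.mp (hB h1.2)
        exact Finset.mem_Icc.mpr ⟨h2.1, by have := h1.1; omega⟩
      have hc : (B.erase (n + 1)).card + 1 = B.card := Finset.card_erase_add_one hmem
      have hle : (B.erase (n + 1)).card ≤ n := by simpa using Finset.card_le_card hsub
      rw [← Finset.sum_erase_add B x hmem, ← hc, Finset.sum_Icc_succ_top (by omega)]
      exact add_le_add (ih hn hsub) (h.le (by omega) (by omega) le_rfl)
    · refine ih hn fun i hi => ?_
      have h2 := Finset.mem_Icc.mp (hB hi)
      have h3 : i ≠ n + 1 := fun h => hmem (h ▸ hi)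
      exact Finset.mem_Icc.mpr ⟨h2.1, by omega⟩

/-- For a non-increasing majorant, majorization bounds all subset sums by initial sums. -/
lemma Maj.sum_le {n : ℕ} {x y : ℕ → ℝ} (h : Maj n x y) (hx : NonIncr n x) {B : Finset ℕ}
    (hB : B ⊆ Finset.Icc 1 n) : ∑ i ∈ B, y i ≤ ∑ i ∈ Finset.Icc 1 B.card, x i := by
  obtain ⟨A, hA, hc, hle⟩ := h.1 B hB
  rw [← hc]
  exact hle.trans (hx.sum_le hA)

/-! ### The extremal partial sums -/

/-- When `lam` is non-increasing and majorizes `mu`, and `m ≤ n - d`, `greedy n lam mu d m` is the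
largest possible sum of the first `m` entries of row `n - d` of a pattern of size `n` with bounding
sequence `lam` and weight `mu`. Rows are counted downwards from
the bounding one, so that the recursion is structural in `d`. -/
noncomputable def greedy (n : ℕ) (lam mu : ℕ → ℝ) : ℕ → ℕ → ℝ
  | 0, m => ∑ i ∈ Finset.Icc 1 m, lam i
  | d + 1, m => min (greedy n lam mu d m) (greedy n lam mu d (m + 1) - mu (n - d))

/-- The pattern whose partial row sums are given by `greedy`. -/
noncomputable def greedyPattern (n : ℕ) (lam mu : ℕ → ℝ) (j i : ℕ) : ℝ :=
  greedy n lam mu (n - j) i - greedy n lam mu (n - j) (i - 1)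

/-- Writing `r m = min (p m) (p (m + 1) - c)`, the difference of `r` between `i` and `i + 1` lies
between two consecutive differences of `p`, provided these are non-increasing. -/
lemma min_shift_interlace (p : ℕ → ℝ) (c : ℝ) (i : ℕ)
    (h : p (i + 2) - p (i + 1) ≤ p (i + 1) - p i) :
    min (p (i + 1)) (p (i + 2) - c) - min (p i) (p (i + 1) - c) ≤ p (i + 1) - p i ∧
    p (i + 2) - p (i + 1) ≤ min (p (i + 1)) (p (i + 2) - c) - min (p i) (p (i + 1) - c) := by
  constructor
  · rcases min_choice (p i) (p (i + 1) - c) with h1 | h1 <;> rw [h1]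
    · linarith [min_le_left (p (i + 1)) (p (i + 2) - c)]
    · linarith [min_le_right (p (i + 1)) (p (i + 2) - c)]
  · rcases min_choice (p (i + 1)) (p (i + 2) - c) with h1 | h1 <;> rw [h1]
    · linarith [min_le_left (p i) (p (i + 1) - c), min_le_right (p i) (p (i + 1) - c)]
    · linarith [min_le_left (p i) (p (i + 1) - c), min_le_right (p i) (p (i + 1) - c)]

lemma greedy_concave {n : ℕ} {lam : ℕ → ℝ} (mu : ℕ → ℝ) (hlam : NonIncr n lam) (d i : ℕ)
    (hi : i + 2 + d ≤ n) :
    greedy n lam mu d (i + 2) - greedy n lam mu d (i + 1) ≤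
      greedy n lam mu d (i + 1) - greedy n lam mu d i := by
  induction d generalizing i with
  | zero =>
    have h1 := hlam (i + 1) (by omega) (by omega)
    simp only [greedy]
    rw [Finset.sum_Icc_succ_top (by omega), Finset.sum_Icc_succ_top (by omega)]
    linarith
  | succ d ih =>
    -- Both differences are compared with the middle difference one row further up.
    have h1 := (min_shift_interlace (greedy n lam mu d) (mu (n - d)) i (ih i (by omega))).2
    have h2 := (min_shift_interlace (greedy n lam mu d) (mu (n - d)) (i + 1)
      (ih (i + 1) (by omega))).1
    simp only [greedy]
    exact h2.trans h1

lemma sum_le_greedy {n : ℕ} {lam mu : ℕ → ℝ} (hlam : NonIncr n lam) (hmaj : Maj n lam mu)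
    (d : ℕ) (hd : d ≤ n) {B : Finset ℕ} (hB : B ⊆ Finset.Icc 1 (n - d)) :
    ∑ i ∈ B, mu i ≤ greedy n lam mu d B.card := by
  induction d generalizing B with
  | zero => exact hmaj.sum_le hlam hB
  | succ d ih =>
    have hnot : n - d ∉ B := fun h => by
      have := Finset.mem_Icc.mp (hB h)
      omega
    have hB' : B ⊆ Finset.Icc 1 (n - d) :=
      hB.trans (Finset.Icc_subset_Icc_right (by omega))
    have hins : insert (n - d) B ⊆ Finset.Icc 1 (n - d) :=
      Finset.insert_subset (Finset.mem_Icc.mpr ⟨by omega, le_rfl⟩) hB'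
    have h1 := ih (by omega) hB'
    have h2 := ih (by omega) hins
    rw [Finset.sum_insert hnot, Finset.card_insert_of_notMem hnot] at h2
    exact le_min h1 (by linarith)

lemma greedy_zero {n : ℕ} {lam mu : ℕ → ℝ} (hlam : NonIncr n lam) (hmaj : Maj n lam mu)
    (d : ℕ) (hd : d ≤ n) : greedy n lam mu d 0 = 0 := by
  refine le_antisymm ?_ (by simpa using sum_le_greedy hlam hmaj d hd (Finset.empty_subset _))
  clear hd
  induction d with
  | zero => simp [greedy]
  | succ d ih => exact (min_le_left _ _).trans ih

lemma greedy_top {n : ℕ} {lam mu : ℕ → ℝ} (hlam : NonIncr n lam) (hmaj : Maj n lam mu)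
    (d : ℕ) (hd : d ≤ n) : greedy n lam mu d (n - d) = ∑ i ∈ Finset.Icc 1 (n - d), mu i := by
  refine le_antisymm ?_
    (by simpa using sum_le_greedy hlam hmaj d hd (Finset.Subset.refl _))
  induction d with
  | zero => exact hmaj.2.le
  | succ d ih =>
    have h1 := ih (by omega)
    have hn : n - d = n - (d + 1) + 1 := by omega
    refine (min_le_right _ _).trans ?_
    rw [hn, Finset.sum_Icc_succ_top (by omega)] at h1
    rw [hn]
    linarith

/-! ### Upper bound for arbitrary patterns -/

lemma rowSum_eq {n : ℕ} {K : ℕ → ℕ → ℝ} {mu : ℕ → ℝ} (hw : HasWeight n K mu) (j : ℕ)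
    (hj : j ≤ n) : rowSum K j = ∑ i ∈ Finset.Icc 1 j, mu i := by
  induction j with
  | zero => simp [rowSum]
  | succ j ih =>
    have h1 := hw (j + 1) (by omega) hj
    rw [Nat.add_sub_cancel, ih (by omega)] at h1
    rw [Finset.sum_Icc_succ_top (by omega)]
    linarith

/-- Interlacing with the row above bounds initial sums from above in two ways: termwise by the
first `m` entries of that row, and, through the row sum, by dropping the last terms. -/
lemma partial_step {n : ℕ} {K : ℕ → ℕ → ℝ} {mu : ℕ → ℝ} (hK : IsGTPattern n K)
    (hw : HasWeight n K mu) (j : ℕ) (hj : j + 1 ≤ n) (m : ℕ) (hm : m ≤ j) :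
    ∑ i ∈ Finset.Icc 1 m, K j i ≤ ∑ i ∈ Finset.Icc 1 m, K (j + 1) i ∧
    ∑ i ∈ Finset.Icc 1 m, K j i ≤ ∑ i ∈ Finset.Icc 1 (m + 1), K (j + 1) i - mu (j + 1) := by
  have hintl : ∀ i, 1 ≤ i → i ≤ j → K j i ≤ K (j + 1) i ∧ K (j + 1) (i + 1) ≤ K j i :=
    fun i h1 h2 => hK.2 j (by omega) hj i h1 (by omega)
  refine ⟨Finset.sum_le_sum fun i hi => ?_, ?_⟩
  · have := Finset.mem_Icc.mp hi
    exact (hintl i this.1 (by omega)).1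
  · induction hm using Nat.decreasingInduction with
    | self =>
      have h1 := hw (j + 1) (by omega) hj
      simp only [rowSum, Nat.add_sub_cancel] at h1
      linarith
    | of_succ m hm ih =>
      have h1 := (hintl (m + 1) (by omega) hm).2
      rw [Finset.sum_Icc_succ_top (by omega),
        Finset.sum_Icc_succ_top (b := m + 1) (by omega)] at ih
      linarith

lemma partial_le_greedy {n : ℕ} {lam mu : ℕ → ℝ} {K : ℕ → ℕ → ℝ} (hK : IsGTPattern n K)
    (hb : HasBounding n K lam) (hw : HasWeight n K mu) (d : ℕ) (hd : d ≤ n) (m : ℕ)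
    (hm : m ≤ n - d) : ∑ i ∈ Finset.Icc 1 m, K (n - d) i ≤ greedy n lam mu d m := by
  induction d generalizing m with
  | zero =>
    refine (Finset.sum_congr rfl fun i hi => ?_).le
    have := Finset.mem_Icc.mp hi
    exact hb i this.1 (by omega)
  | succ d ih =>
    have hn : n - (d + 1) + 1 = n - d := by omega
    obtain ⟨h1, h2⟩ := partial_step hK hw (n - (d + 1)) (by omega) m hm
    rw [hn] at h1 h2
    have h3 := ih (by omega) m (by omega)
    have h4 := ih (by omega) (m + 1) (by omega)
    exact le_min (h1.trans h3) (by linarith)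

/-! ### The extremal pattern -/

lemma sum_greedyPattern {n : ℕ} {lam mu : ℕ → ℝ} (hlam : NonIncr n lam) (hmaj : Maj n lam mu)
    (j m : ℕ) : ∑ i ∈ Finset.Icc 1 m, greedyPattern n lam mu j i = greedy n lam mu (n - j) m := by
  induction m with
  | zero => simp [greedy_zero hlam hmaj (n - j) (by omega)]
  | succ m ih =>
    rw [Finset.sum_Icc_succ_top (by omega), ih, greedyPattern, Nat.add_sub_cancel]
    ring

lemma greedyPattern_interlaces {n : ℕ} {lam : ℕ → ℝ} (mu : ℕ → ℝ) (hlam : NonIncr n lam)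
    (j : ℕ) (hj : j + 1 ≤ n) :
    Interlaces (j + 1) (greedyPattern n lam mu (j + 1)) (greedyPattern n lam mu j) := by
  intro i h1 h2
  obtain ⟨i, rfl⟩ : ∃ k, i = k + 1 := ⟨i - 1, by omega⟩
  have hn : n - j = n - (j + 1) + 1 := by omega
  simp only [greedyPattern, Nat.add_sub_cancel, hn, greedy]
  exact min_shift_interlace _ _ i (greedy_concave mu hlam _ i (by omega))

lemma greedyPattern_isGT {n : ℕ} {lam : ℕ → ℝ} (mu : ℕ → ℝ) (hlam : NonIncr n lam) :
    IsGTPattern n (greedyPattern n lam mu) := by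
  refine ⟨fun j _ hj i h1 h2 => ?_, fun j _ hj => greedyPattern_interlaces mu hlam j hj⟩
  obtain ⟨i, rfl⟩ : ∃ k, i = k + 1 := ⟨i - 1, by omega⟩
  simp only [greedyPattern, Nat.add_sub_cancel]
  exact greedy_concave mu hlam _ i (by omega)

lemma greedyPattern_bounding {n : ℕ} (lam mu : ℕ → ℝ) :
    HasBounding n (greedyPattern n lam mu) lam := by
  intro i h1 _
  obtain ⟨i, rfl⟩ : ∃ k, i = k + 1 := ⟨i - 1, by omega⟩
  simp only [greedyPattern, Nat.add_sub_cancel, Nat.sub_self, greedy]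
  rw [Finset.sum_Icc_succ_top (by omega)]
  ring

lemma greedyPattern_rowSum {n : ℕ} {lam mu : ℕ → ℝ} (hlam : NonIncr n lam)
    (hmaj : Maj n lam mu) (j : ℕ) (hj : j ≤ n) :
    rowSum (greedyPattern n lam mu) j = ∑ i ∈ Finset.Icc 1 j, mu i := by
  have h := greedy_top hlam hmaj (n - j) (by omega)
  rw [Nat.sub_sub_self hj] at h
  rw [rowSum, sum_greedyPattern hlam hmaj, h]

lemma greedyPattern_weight {n : ℕ} {lam mu : ℕ → ℝ} (hlam : NonIncr n lam)
    (hmaj : Maj n lam mu) : HasWeight n (greedyPattern n lam mu) mu := by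
  intro j h1 h2
  obtain ⟨j, rfl⟩ : ∃ k, j = k + 1 := ⟨j - 1, by omega⟩
  rw [greedyPattern_rowSum hlam hmaj _ h2, Nat.add_sub_cancel,
    greedyPattern_rowSum hlam hmaj _ (by omega), Finset.sum_Icc_succ_top (by omega)]
  ring

lemma greedyPattern_maj {n : ℕ} {lam mu : ℕ → ℝ} (hlam : NonIncr n lam)
    (hmaj : Maj n lam mu) {K : ℕ → ℕ → ℝ} (hK : IsGTPattern n K)
    (hb : HasBounding n K lam) (hw : HasWeight n K mu) (j : ℕ) (h1 : 1 ≤ j) (hj : j ≤ n) :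
    Maj j (greedyPattern n lam mu j) (K j) := by
  refine ⟨fun B hB => ?_, ?_⟩
  · have hc : B.card ≤ j := by simpa using Finset.card_le_card hB
    refine ⟨Finset.Icc 1 B.card, Finset.Icc_subset_Icc_right hc, by simp, ?_⟩
    refine ((hK.1 j h1 hj).sum_le hB).trans ?_
    have h := partial_le_greedy hK hb hw (n - j) (by omega) B.card (by omega)
    rw [Nat.sub_sub_self hj] at h
    rwa [sum_greedyPattern hlam hmaj]
  · exact (greedyPattern_rowSum hlam hmaj j hj).trans (rowSum_eq hw j hj).symm

/-- Majorization is antisymmetric on non-increasing sequences. -/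
lemma Maj.antisymm {n : ℕ} {x y : ℕ → ℝ} (hx : NonIncr n x) (hy : NonIncr n y)
    (hxy : Maj n x y) (hyx : Maj n y x) (i : ℕ) (h1 : 1 ≤ i) (hi : i ≤ n) : x i = y i := by
  have key : ∀ m ≤ n, ∑ i ∈ Finset.Icc 1 m, x i = ∑ i ∈ Finset.Icc 1 m, y i := by
    intro m hm
    have hs : Finset.Icc 1 m ⊆ Finset.Icc 1 n := Finset.Icc_subset_Icc_right hm
    have ha := hxy.sum_le hx hs
    have hb := hyx.sum_le hy hs
    simp only [Nat.card_Icc, Nat.add_sub_cancel] at ha hb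
    exact le_antisymm hb ha
  obtain ⟨i, rfl⟩ : ∃ k, i = k + 1 := ⟨i - 1, by omega⟩
  have ha := key (i + 1) hi
  rw [Finset.sum_Icc_succ_top (by omega), Finset.sum_Icc_succ_top (by omega),
    key i (by omega)] at ha
  linarith

/-- If the non-increasing sequence `lam` majorizes `μ`, there is a unique
GT pattern with bounding sequence `lam` and weight `μ` each of whose rows majorizes the
corresponding row of every GT pattern with bounding sequence `lam` and weight `μ`. -/
theorem stmt0 (n : ℕ) (lam mu : ℕ → ℝ) (hlam : NonIncr n lam) (hmaj : Maj n lam mu) :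
    ∃ L : ℕ → ℕ → ℝ,
      (IsGTPattern n L ∧ HasBounding n L lam ∧ HasWeight n L mu ∧
        ∀ K : ℕ → ℕ → ℝ, IsGTPattern n K → HasBounding n K lam → HasWeight n K mu →
          ∀ j, 1 ≤ j → j ≤ n → Maj j (L j) (K j)) ∧
      ∀ L' : ℕ → ℕ → ℝ,
        (IsGTPattern n L' ∧ HasBounding n L' lam ∧ HasWeight n L' mu ∧
          ∀ K : ℕ → ℕ → ℝ, IsGTPattern n K → HasBounding n K lam → HasWeight n K mu →
            ∀ j, 1 ≤ j → j ≤ n → Maj j (L' j) (K j)) →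
        ∀ j i, 1 ≤ i → i ≤ j → j ≤ n → L' j i = L j i := by
  have hGT := greedyPattern_isGT mu hlam
  have hB := greedyPattern_bounding (n := n) lam mu
  have hW := greedyPattern_weight hlam hmaj
  refine ⟨greedyPattern n lam mu, ⟨hGT, hB, hW, fun K hK hb hw j h1 hj =>
    greedyPattern_maj hlam hmaj hK hb hw j h1 hj⟩, ?_⟩
  rintro L' ⟨hK, hb, hw, hmax⟩ j i h1 hij hj
  exact Maj.antisymm (hK.1 j (by omega) hj) (hGT.1 j (by omega) hj)
    (hmax _ hGT hB hW j (by omega) hj)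
    (greedyPattern_maj hlam hmaj hK hb hw j (by omega) hj) i h1 hij
end

section
/- Let λ: λ_1 ≥ … ≥ λ_n be a non-increasing sequence of real numbers and let μ ∈ ℝ^n be such that λ majorizes μ. Then there exists a Gelfand–Tsetlin pattern P with bounding sequence λ and weight μ whose triangular area equals (1/2)(||λ||^2 − ||μ||^2), and every Gelfand–Tsetlin pattern with bounding sequence λ and weight μ that is distinct from P has triangular area strictly less than (1/2)(||λ||^2 − ||μ||^2). -/
/-!
The proof compares the triangular area with the trapezoidal area
`∑_{i ≤ j} (λ_i - ν_i) (ν_j - λ_{j+1})`. For one pair of consecutive rows, with weight `a`,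
the latter always equals `(‖λ‖² - ‖ν‖² - a²) / 2`, so that summing over the rows of a pattern
telescopes to `(‖λ‖² - ‖μ‖²) / 2` (`patTrapArea_eq`). The triangular area retains only the diagonal
terms `i = j`. All terms are nonnegative, so it is at most the trapezoidal area, with equality iff
every cross term `i < j` vanishes in every pair of rows (`CrossZero`).

For a given upper row and weight there is at most one lower row with vanishing cross terms
(`row_unique`): two such rows are comparable entrywise, and they have the same sum. Descending from
the top row, this gives uniqueness of the maximizing pattern.

For existence, pick `k` with `λ_k ≥ μ_n ≥ λ_{k+1}` and replace the two entries `λ_k, λ_{k+1}` of `λ`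
by the single entry `λ_k + λ_{k+1} - μ_n`. The resulting row interlaces `λ`, has vanishing cross
terms, and majorizes `(μ_1, …, μ_{n-1})`, so the construction can be iterated (`exists_pattern`).
-/


open Finset

/-- All off-diagonal terms of the trapezoidal area of `lam` (length `m + 1`) and `nu` (length `m`)
vanish. -/
def CrossZero (m : ℕ) (lam nu : ℕ → ℝ) : Prop :=
  ∀ i j, 1 ≤ i → i < j → j ≤ m → (lam i - nu i) * (nu j - lam (j + 1)) = 0

/-! ### Trapezoidal area -/

lemma trapArea_eq (m : ℕ) (lam nu : ℕ → ℝ) :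
    trapArea (m + 1) lam nu =
      (normSq (m + 1) lam - normSq m nu
        - (∑ i ∈ Icc 1 (m + 1), lam i - ∑ i ∈ Icc 1 m, nu i) ^ 2) / 2 := by
  induction m with
  | zero => simp [trapArea, normSq]
  | succ m ih =>
    have hstep : trapArea (m + 1 + 1) lam nu = trapArea (m + 1) lam nu
        + ∑ i ∈ Icc 1 (m + 1), (lam i - nu i) * (nu (m + 1) - lam (m + 2)) := by
      unfold trapArea
      simp only [Nat.add_sub_cancel]
      have h1 : ∀ i ∈ Icc 1 (m + 1),
          ∑ j ∈ Icc i (m + 1), (lam i - nu i) * (nu j - lam (j + 1))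
          = ∑ j ∈ Icc i m, (lam i - nu i) * (nu j - lam (j + 1))
            + (lam i - nu i) * (nu (m + 1) - lam (m + 2)) := by
        intro i hi
        rw [Finset.sum_Icc_succ_top (by have := (Finset.mem_Icc.1 hi).2; omega)]
      rw [Finset.sum_congr rfl h1, Finset.sum_add_distrib]
      congr 1
      rw [Finset.sum_Icc_succ_top (by omega)]
      simp
    rw [hstep, ih, ← Finset.sum_mul, Finset.sum_sub_distrib]
    unfold normSq
    rw [Finset.sum_Icc_succ_top (b := m + 1) (by omega) lam,
      Finset.sum_Icc_succ_top (b := m + 1) (by omega) (fun i => lam i ^ 2),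
      Finset.sum_Icc_succ_top (b := m) (by omega) nu,
      Finset.sum_Icc_succ_top (b := m) (by omega) (fun i => nu i ^ 2)]
    ring

/-- The trapezoidal area of a pattern depends only on its bounding sequence and weight. -/
lemma patTrapArea_eq (n : ℕ) (L : ℕ → ℕ → ℝ) (mu : ℕ → ℝ) (hw : HasWeight n L mu) :
    patTrapArea n L = (normSq n (L n) - normSq n mu) / 2 := by
  induction n with
  | zero => simp [patTrapArea, normSq]
  | succ n ih =>
    have hwn := hw (n + 1) (by omega) le_rfl
    rcases Nat.eq_zero_or_pos n with rfl | hn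
    · simp [rowSum] at hwn
      simp [patTrapArea, normSq, hwn]
    · have ih' := ih (fun j h1 h2 => hw j h1 (by omega))
      have hstep : patTrapArea (n + 1) L
          = patTrapArea n L + trapArea (n + 1) (L (n + 1)) (L n) := by
        unfold patTrapArea
        obtain ⟨p, rfl⟩ : ∃ p, n = p + 1 := ⟨n - 1, by omega⟩
        simp only [Nat.add_sub_cancel]
        rw [Finset.sum_Icc_succ_top (by omega)]
      rw [hstep, ih', trapArea_eq]
      unfold rowSum at hwn
      simp only [Nat.add_sub_cancel] at hwn
      rw [hwn]
      have : normSq (n + 1) mu = normSq n mu + mu (n + 1) ^ 2 := by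
        unfold normSq
        rw [Finset.sum_Icc_succ_top (by omega)]
      rw [this]
      ring

/-! ### Comparison of the two areas -/

lemma inner_ge (m : ℕ) (lam nu : ℕ → ℝ) (h : Interlaces (m + 1) lam nu) (i : ℕ)
    (hi : i ∈ Icc 1 m) :
    (lam i - nu i) * (nu i - lam (i + 1)) ≤
      ∑ j ∈ Icc i m, (lam i - nu i) * (nu j - lam (j + 1)) := by
  rw [Finset.mem_Icc] at hi
  refine Finset.single_le_sum (f := fun j => (lam i - nu i) * (nu j - lam (j + 1)))
    (fun j hj => ?_) (Finset.mem_Icc.2 ⟨le_rfl, hi.2⟩)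
  rw [Finset.mem_Icc] at hj
  exact mul_nonneg (sub_nonneg.2 (h i hi.1 (by omega)).1)
    (sub_nonneg.2 (h j (by omega) (by omega)).2)

lemma triArea_le (m : ℕ) (lam nu : ℕ → ℝ) (h : Interlaces (m + 1) lam nu) :
    triArea (m + 1) lam nu ≤ trapArea (m + 1) lam nu :=
  Finset.sum_le_sum (inner_ge m lam nu h)

lemma crossZero_of_eq (m : ℕ) (lam nu : ℕ → ℝ) (h : Interlaces (m + 1) lam nu)
    (he : triArea (m + 1) lam nu = trapArea (m + 1) lam nu) : CrossZero m lam nu := by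
  intro i j hi hij hj
  have h1 := (Finset.sum_eq_sum_iff_of_le (inner_ge m lam nu h)).1 he i
    (Finset.mem_Icc.2 ⟨hi, by omega⟩)
  rw [← Finset.add_sum_Ioc_eq_sum_Icc (by omega : i ≤ m)] at h1
  have h2 : ∑ j ∈ Ioc i m, (lam i - nu i) * (nu j - lam (j + 1)) = 0 := by linarith
  rw [Finset.sum_eq_zero_iff_of_nonneg] at h2
  · exact h2 j (Finset.mem_Ioc.2 ⟨hij, hj⟩)
  · intro j hj
    rw [Finset.mem_Ioc] at hj
    exact mul_nonneg (sub_nonneg.2 (h i hi (by omega)).1)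
      (sub_nonneg.2 (h j (by omega) (by omega)).2)

lemma eq_of_crossZero (m : ℕ) (lam nu : ℕ → ℝ) (h : CrossZero m lam nu) :
    triArea (m + 1) lam nu = trapArea (m + 1) lam nu := by
  unfold triArea trapArea
  simp only [Nat.add_sub_cancel]
  refine Finset.sum_congr rfl fun i hi => ?_
  rw [Finset.mem_Icc] at hi
  symm
  refine Finset.sum_eq_single i (fun j hj hne => ?_) (fun hn => ?_)
  · rw [Finset.mem_Icc] at hj
    exact h i j hi.1 (by omega) hj.2
  · exact absurd (Finset.mem_Icc.2 ⟨le_rfl, hi.2⟩) hn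

/-! ### Uniqueness of the lower row -/

lemma not_lt_gt (m : ℕ) (lam nu nu' : ℕ → ℝ) (h' : Interlaces (m + 1) lam nu')
    (c : CrossZero m lam nu) (i j : ℕ) (hi : 1 ≤ i) (hij : i < j) (hj : j ≤ m)
    (hlt : nu i < nu' i) : nu j ≤ nu' j := by
  have h1 := (h' i hi (by omega)).1
  have h2 := (h' j (by omega) (by omega)).2
  rcases mul_eq_zero.1 (c i j hi hij hj) with h | h <;> linarith

lemma row_unique (m : ℕ) (lam nu nu' : ℕ → ℝ) (h : Interlaces (m + 1) lam nu)
    (h' : Interlaces (m + 1) lam nu') (c : CrossZero m lam nu) (c' : CrossZero m lam nu')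
    (hs : ∑ i ∈ Icc 1 m, nu i = ∑ i ∈ Icc 1 m, nu' i) :
    ∀ i ∈ Icc 1 m, nu i = nu' i := by
  by_cases hle : ∀ i ∈ Icc 1 m, nu i ≤ nu' i
  · exact (Finset.sum_eq_sum_iff_of_le hle).1 hs
  · push Not at hle
    obtain ⟨j, hj, hlt⟩ := hle
    rw [Finset.mem_Icc] at hj
    have hge : ∀ i ∈ Icc 1 m, nu' i ≤ nu i := by
      intro i hi
      rw [Finset.mem_Icc] at hi
      by_contra hcon
      push Not at hcon
      rcases lt_trichotomy i j with hij | rfl | hij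
      · have := not_lt_gt m lam nu nu' h' c i j hi.1 hij hj.2 hcon
        linarith
      · linarith
      · have := not_lt_gt m lam nu' nu h c' j i hj.1 hij hi.2 hlt
        linarith
    intro i hi
    exact ((Finset.sum_eq_sum_iff_of_le hge).1 hs.symm i hi).symm

/-! ### Existence -/

lemma nonIncr_le (n : ℕ) (x : ℕ → ℝ) (hx : NonIncr n x) (i j : ℕ) (hi : 1 ≤ i) (hij : i ≤ j)
    (hj : j ≤ n) : x j ≤ x i := by
  induction j, hij using Nat.le_induction with
  | base => exact le_rfl
  | succ j hij ih => exact (hx j (by omega) hj).trans (ih (by omega))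

lemma sum_le_top (n : ℕ) (x : ℕ → ℝ) (hx : NonIncr n x) (A : Finset ℕ) (hA : A ⊆ Icc 1 n) :
    ∑ i ∈ A, x i ≤ ∑ i ∈ Icc 1 A.card, x i := by
  induction n generalizing A with
  | zero =>
    have : A = ∅ := by simpa using hA
    simp [this]
  | succ n ih =>
    have hx' : NonIncr n x := fun i h1 h2 => hx i h1 (by omega)
    have hsub : A.erase (n + 1) ⊆ Icc 1 n := by
      intro i hi
      rw [Finset.mem_erase] at hi
      have := Finset.mem_Icc.1 (hA hi.2)
      rw [Finset.mem_Icc]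
      omega
    by_cases hmem : n + 1 ∈ A
    · have h1 := ih hx' _ hsub
      have hc : (A.erase (n + 1)).card + 1 = A.card := Finset.card_erase_add_one hmem
      have hle : (A.erase (n + 1)).card ≤ n := by simpa using Finset.card_le_card hsub
      rw [← Finset.add_sum_erase A x hmem, ← hc, Finset.sum_Icc_succ_top (by omega)]
      have := nonIncr_le (n + 1) x hx ((A.erase (n + 1)).card + 1) (n + 1) (by omega) (by omega)
        le_rfl
      linarith
    · rw [Finset.erase_eq_of_notMem hmem] at hsub
      exact ih hx' A hsub

lemma exists_bracket (m : ℕ) (x : ℕ → ℝ) (a : ℝ) (h1 : a ≤ x 1) (h2 : x (m + 2) ≤ a) :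
    ∃ k, 1 ≤ k ∧ k ≤ m + 1 ∧ a ≤ x k ∧ x (k + 1) ≤ a := by
  induction m with
  | zero => exact ⟨1, le_rfl, le_rfl, h1, h2⟩
  | succ m ih =>
    by_cases h : x (m + 2) ≤ a
    · obtain ⟨k, hk1, hk2, hk3⟩ := ih h
      exact ⟨k, hk1, by omega, hk3⟩
    · exact ⟨m + 2, by omega, by omega, by linarith, h2⟩

/-- The row obtained from `lam` by replacing the entries `lam k, lam (k + 1)` by the single entry
`lam k + lam (k + 1) - a`. -/
noncomputable def mergeRow (lam : ℕ → ℝ) (k : ℕ) (a : ℝ) (i : ℕ) : ℝ :=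
  if i < k then lam i else if i = k then lam k + lam (k + 1) - a else lam (i + 1)

lemma mergeRow_sum_lt (lam : ℕ → ℝ) (k : ℕ) (a : ℝ) (j : ℕ) (hj : j < k) :
    ∑ i ∈ Icc 1 j, mergeRow lam k a i = ∑ i ∈ Icc 1 j, lam i := by
  refine Finset.sum_congr rfl fun i hi => ?_
  rw [Finset.mem_Icc] at hi
  simp [mergeRow, show i < k by omega]

lemma mergeRow_sum_ge (lam : ℕ → ℝ) (k : ℕ) (a : ℝ) (hk : 1 ≤ k) (j : ℕ) (hj : k ≤ j) :
    ∑ i ∈ Icc 1 j, mergeRow lam k a i = ∑ i ∈ Icc 1 (j + 1), lam i - a := by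
  induction j, hj using Nat.le_induction with
  | base =>
    obtain ⟨p, rfl⟩ : ∃ p, k = p + 1 := ⟨k - 1, by omega⟩
    rw [Finset.sum_Icc_succ_top (by omega), mergeRow_sum_lt _ _ _ _ (by omega),
      Finset.sum_Icc_succ_top (b := p + 1) (by omega), Finset.sum_Icc_succ_top (by omega)]
    simp [mergeRow]
    ring
  | succ j hj ih =>
    rw [Finset.sum_Icc_succ_top (by omega), ih, Finset.sum_Icc_succ_top (b := j + 1) (by omega)]
    simp [mergeRow, show ¬ (j + 1 < k) by omega, show j + 1 ≠ k by omega]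
    ring

lemma mergeRow_interlaces (m : ℕ) (lam : ℕ → ℝ) (hlam : NonIncr (m + 1) lam) (k : ℕ) (a : ℝ)
    (h1 : a ≤ lam k) (h2 : lam (k + 1) ≤ a) :
    Interlaces (m + 1) lam (mergeRow lam k a) := by
  intro i hi1 hi2
  have := hlam i hi1 hi2
  unfold mergeRow
  split_ifs with c1 c2
  · exact ⟨le_rfl, this⟩
  · subst c2
    constructor <;> linarith
  · exact ⟨this, le_rfl⟩

lemma mergeRow_crossZero (m : ℕ) (lam : ℕ → ℝ) (k : ℕ) (a : ℝ) :
    CrossZero m lam (mergeRow lam k a) := by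
  intro i j hi hij hj
  by_cases hik : i < k
  · simp [mergeRow, hik]
  · simp [mergeRow, show ¬ j < k by omega, show j ≠ k by omega]

lemma interlaces_nonIncr (m : ℕ) (lam nu : ℕ → ℝ) (h : Interlaces (m + 1) lam nu) :
    NonIncr m nu := fun i h1 h2 =>
  (h (i + 1) (by omega) (by omega)).1.trans (h i h1 (by omega)).2

/-- The greedy construction of the extremal pattern. Majorization is stated in terms of the initial
sums of `lam`, which is equivalent since `lam` is non-increasing. -/
lemma exists_pattern (n : ℕ) (lam mu : ℕ → ℝ) (hlam : NonIncr n lam)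
    (hmaj : ∀ B ⊆ Icc 1 n, ∑ i ∈ B, mu i ≤ ∑ i ∈ Icc 1 B.card, lam i)
    (hsum : ∑ i ∈ Icc 1 n, lam i = ∑ i ∈ Icc 1 n, mu i) :
    ∃ L : ℕ → ℕ → ℝ, IsGTPattern n L ∧ HasBounding n L lam ∧ HasWeight n L mu ∧
      ∀ j, 1 ≤ j → j + 1 ≤ n → CrossZero j (L (j + 1)) (L j) := by
  induction n generalizing lam with
  | zero =>
    exact ⟨fun _ _ => 0, ⟨fun j _ _ => by omega, fun j _ _ => by omega⟩,
      fun i _ _ => by omega, fun j _ _ => by omega, fun j _ _ => by omega⟩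
  | succ n ih =>
    rcases Nat.eq_zero_or_pos n with rfl | hn
    · refine ⟨fun _ => lam, ⟨fun j h1 h2 => ?_, fun j _ _ => by omega⟩,
        fun i _ _ => rfl, fun j h1 h2 => ?_, fun j _ _ => by omega⟩
      · obtain rfl : j = 1 := by omega
        exact hlam
      · obtain rfl : j = 1 := by omega
        simpa [rowSum] using hsum
    · obtain ⟨m, rfl⟩ : ∃ m, n = m + 1 := ⟨n - 1, by omega⟩
      have ha1 : mu (m + 2) ≤ lam 1 := by
        have := hmaj {m + 2} (by simp)
        simpa using this
      have ha2 : lam (m + 2) ≤ mu (m + 2) := by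
        have := hmaj (Icc 1 (m + 1)) (Finset.Icc_subset_Icc le_rfl (by omega))
        rw [Finset.sum_Icc_succ_top (by omega), Finset.sum_Icc_succ_top (b := m + 1) (by omega)]
          at hsum
        simp only [Nat.card_Icc, Nat.add_sub_cancel] at this
        linarith
      obtain ⟨k, hk1, hk2, hk3, hk4⟩ := exists_bracket m lam (mu (m + 2)) ha1 ha2
      set nu := mergeRow lam k (mu (m + 2)) with hnu
      have hint : Interlaces (m + 1 + 1) lam nu :=
        mergeRow_interlaces (m + 1) lam hlam k _ hk3 hk4
      have hcross : CrossZero (m + 1) lam nu := mergeRow_crossZero (m + 1) lam k _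
      have hnusum : ∑ i ∈ Icc 1 (m + 1), nu i = ∑ i ∈ Icc 1 (m + 2), lam i - mu (m + 2) :=
        mergeRow_sum_ge lam k _ hk1 (m + 1) hk2
      have hnuI := interlaces_nonIncr (m + 1) lam nu hint
      obtain ⟨L, hL1, hL2, hL3, hL4⟩ := ih nu hnuI (by
        intro B hB
        have hB' : B ⊆ Icc 1 (m + 1 + 1) :=
          hB.trans (Finset.Icc_subset_Icc le_rfl (by omega))
        rcases lt_or_ge B.card k with hc | hc
        · rw [hnu, mergeRow_sum_lt _ _ _ _ hc]
          exact hmaj B hB'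
        · rw [hnu, mergeRow_sum_ge _ _ _ hk1 _ hc]
          -- the hypothesis is applied to `B` together with the last index
          have hnot : m + 2 ∉ B := fun hmem => by
            have := (Finset.mem_Icc.1 (hB hmem)).2
            omega
          have := hmaj (insert (m + 2) B) (Finset.insert_subset (by simp) hB')
          rw [Finset.sum_insert hnot, Finset.card_insert_of_notMem hnot] at this
          linarith) (by
        rw [hnusum, hsum, Finset.sum_Icc_succ_top (b := m + 1) (by omega)]
        ring)
      -- the row `m + 1` of `L` agrees with `nu` only on its meaningful indices `1, …, m + 1`
      have hLsum : rowSum L (m + 1) = ∑ i ∈ Icc 1 (m + 1), nu i :=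
        Finset.sum_congr rfl fun i hi =>
          hL2 i (Finset.mem_Icc.1 hi).1 (Finset.mem_Icc.1 hi).2
      refine ⟨fun j => if j = m + 2 then lam else L j, ⟨?_, ?_⟩, ?_, ?_, ?_⟩
      · intro j h1 h2
        by_cases hj : j = m + 2
        · subst hj
          simpa using hlam
        · simpa [hj] using hL1.1 j h1 (by omega)
      · intro j h1 h2
        by_cases hj : j = m + 1
        · subst hj
          simp only [if_pos, show m + 1 ≠ m + 2 by omega, if_false]
          intro i hi1 hi2
          rw [hL2 i hi1 (by omega)]
          exact hint i hi1 hi2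
        · simpa [hj, show j ≠ m + 2 by omega] using hL1.2 j h1 (by omega)
      · intro i h1 h2
        simp
      · intro j h1 h2
        by_cases hj : j = m + 2
        · subst hj
          have e1 : rowSum (fun j => if j = m + 2 then lam else L j) (m + 2)
              = ∑ i ∈ Icc 1 (m + 2), lam i := by simp [rowSum]
          have e2 : rowSum (fun j => if j = m + 2 then lam else L j) (m + 2 - 1)
              = rowSum L (m + 1) := by simp [rowSum]
          rw [e1, e2, hLsum, hnusum]
          ring
        · have := hL3 j h1 (by omega)
          simpa [rowSum, hj, show j - 1 ≠ m + 2 by omega] using this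
      · intro j h1 h2
        by_cases hj : j = m + 1
        · subst hj
          simp only [if_pos, show m + 1 ≠ m + 2 by omega, if_false]
          intro i l hi1 hil hl
          rw [hL2 i hi1 (by omega), hL2 l (by omega) hl]
          exact hcross i l hi1 hil hl
        · simpa [hj, show j ≠ m + 2 by omega] using hL4 j h1 (by omega)

/-- A pattern whose triangular area attains the trapezoidal area has vanishing cross terms. -/
lemma crossZero_of_patTriArea_ge (n : ℕ) (K : ℕ → ℕ → ℝ) (hK : IsGTPattern n K)
    (hge : patTrapArea n K ≤ patTriArea n K) :
    ∀ j, 1 ≤ j → j + 1 ≤ n → CrossZero j (K (j + 1)) (K j) := by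
  have hle : ∀ j ∈ Icc 1 (n - 1), triArea (j + 1) (K (j + 1)) (K j)
      ≤ trapArea (j + 1) (K (j + 1)) (K j) := by
    intro j hj
    rw [Finset.mem_Icc] at hj
    exact triArea_le j _ _ (hK.2 j hj.1 (by omega))
  have heq := (Finset.sum_eq_sum_iff_of_le hle).1 (le_antisymm (Finset.sum_le_sum hle) hge)
  intro j h1 h2
  exact crossZero_of_eq j _ _ (hK.2 j h1 h2) (heq j (Finset.mem_Icc.2 ⟨h1, by omega⟩))

/-- There is a GT pattern with bounding sequence `lam` and weight `μ`
whose triangular area is `(‖lam‖² - ‖μ‖²)/2`, and any other pattern with the same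
bounding sequence and weight has strictly smaller triangular area. -/
theorem stmt2 (n : ℕ) (lam mu : ℕ → ℝ) (hlam : NonIncr n lam) (hmaj : Maj n lam mu) :
    ∃ L : ℕ → ℕ → ℝ,
      IsGTPattern n L ∧ HasBounding n L lam ∧ HasWeight n L mu ∧
      patTriArea n L = (normSq n lam - normSq n mu) / 2 ∧
      ∀ K : ℕ → ℕ → ℝ, IsGTPattern n K → HasBounding n K lam → HasWeight n K mu →
        (∃ j i, 1 ≤ i ∧ i ≤ j ∧ j ≤ n ∧ K j i ≠ L j i) →
        patTriArea n K < (normSq n lam - normSq n mu) / 2 := by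
  have hmaj' : ∀ B ⊆ Icc 1 n, ∑ i ∈ B, mu i ≤ ∑ i ∈ Icc 1 B.card, lam i := by
    intro B hB
    obtain ⟨A, hA, hc, hle⟩ := hmaj.1 B hB
    rw [← hc]
    exact hle.trans (sum_le_top n lam hlam A hA)
  obtain ⟨L, hL1, hL2, hL3, hL4⟩ := exists_pattern n lam mu hlam hmaj' hmaj.2
  have hnorm : ∀ K : ℕ → ℕ → ℝ, HasBounding n K lam → normSq n (K n) = normSq n lam := by
    intro K hK
    refine Finset.sum_congr rfl fun i hi => ?_
    rw [hK i (Finset.mem_Icc.1 hi).1 (Finset.mem_Icc.1 hi).2]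
  refine ⟨L, hL1, hL2, hL3, ?_, ?_⟩
  · rw [← hnorm L hL2, ← patTrapArea_eq n L mu hL3]
    refine Finset.sum_congr rfl fun j hj => ?_
    rw [Finset.mem_Icc] at hj
    exact eq_of_crossZero j _ _ (hL4 j hj.1 (by omega))
  · intro K hK1 hK2 hK3 hne
    by_contra hcon
    push Not at hcon
    rw [← hnorm K hK2, ← patTrapArea_eq n K mu hK3] at hcon
    have hK4 := crossZero_of_patTriArea_ge n K hK1 hcon
    -- the rows of `K` and `L` agree, by descent from the top row
    have key : ∀ d j, j + d = n → ∀ i, 1 ≤ i → i ≤ j → K j i = L j i := by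
      intro d
      induction d with
      | zero =>
        intro j hj i h1 h2
        obtain rfl : j = n := by omega
        rw [hK2 i h1 h2, hL2 i h1 h2]
      | succ d ih =>
        intro j hj i h1 h2
        have hup := ih (j + 1) (by omega)
        have hsum : ∑ i ∈ Icc 1 j, K j i = ∑ i ∈ Icc 1 j, L j i := by
          have hs : rowSum K (j + 1) = rowSum L (j + 1) :=
            Finset.sum_congr rfl fun i hi =>
              hup i (Finset.mem_Icc.1 hi).1 (Finset.mem_Icc.1 hi).2
          have w1 := hK3 (j + 1) (by omega) (by omega)
          have w2 := hL3 (j + 1) (by omega) (by omega)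
          simp only [Nat.add_sub_cancel] at w1 w2
          have : rowSum K j = rowSum L j := by linarith
          exact this
        refine row_unique j (K (j + 1)) (K j) (L j) (hK1.2 j (by omega) (by omega)) ?_
          (hK4 j (by omega) (by omega)) ?_ hsum i (Finset.mem_Icc.2 ⟨h1, h2⟩)
        · intro i hi1 hi2
          rw [hup i hi1 (by omega), hup (i + 1) (by omega) hi2]
          exact hL1.2 j (by omega) (by omega) i hi1 hi2
        · intro i l hi1 hil hl
          rw [hup i hi1 (by omega), hup (l + 1) (by omega) (by omega)]
          exact hL4 j (by omega) (by omega) i l hi1 hil hl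
    obtain ⟨j, i, h1, h2, h3, h4⟩ := hne
    exact h4 (key (n - j) j (by omega) i h1 h2)
end

section
/- Let λ^1, …, λ^n be a Gelfand–Tsetlin pattern with weight μ = (μ_1, …, μ_n). Then the bounding sequence λ^n majorizes μ. -/
/-!
By induction on `m`, any `k` of the first `m` weight entries sum to at most
`L m 1 + ⋯ + L m k` (`sum_weight_le`). In the step from `m` to `m + 1`, a set of indices avoiding
`m + 1` is handled by `L m i ≤ L (m + 1) i`. If the set contains `m + 1` and `k` further indices,
the weight entry `m + 1` is the difference of two row sums, and `L (m + 1) (i + 1) ≤ L m i` for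
`k < i ≤ m` bounds it by the difference of the first `k + 1` entries of row `m + 1` and the first
`k` entries of row `m` (`rowSum_diff_le`). For `m = n` this is the majorization inequality, with
`{1, …, k}` as the dominating index set; equality of the total sums is a telescoping sum.
-/

open Finset

/-- Since `x (i + 1) ≤ y i`, the difference between the sum of the first `k + 1` entries of `x`
and that of the first `k` entries of `y` is non-increasing in `k`, hence at least its value at
`k = m`. For consecutive rows of a pattern that value is the weight entry `m + 1`. -/
lemma rowSum_diff_le {m : ℕ} {x y : ℕ → ℝ} (h : Interlaces (m + 1) x y) (d : ℕ) :
    ∀ k, k + d = m →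
      ∑ i ∈ Icc 1 (m + 1), x i - ∑ i ∈ Icc 1 m, y i ≤
        ∑ i ∈ Icc 1 (k + 1), x i - ∑ i ∈ Icc 1 k, y i := by
  induction d with
  | zero =>
    intro k hk
    obtain rfl : k = m := by omega
    exact le_rfl
  | succ d ih =>
    intro k hk
    have h1 := ih (k + 1) (by omega)
    have h2 := (h (k + 1) (by omega) (by omega)).2
    rw [sum_Icc_succ_top (by omega : 1 ≤ k + 1 + 1) x,
      sum_Icc_succ_top (by omega : 1 ≤ k + 1) y] at h1
    linarith

/-- Any `k` weight entries among the first `m` sum to at most the first `k` entries of row `m`. -/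
lemma sum_weight_le {n : ℕ} {L : ℕ → ℕ → ℝ} {mu : ℕ → ℝ}
    (hL : IsGTPattern n L) (hw : HasWeight n L mu) (m : ℕ) :
    m ≤ n → ∀ B ⊆ Icc 1 m, ∑ i ∈ B, mu i ≤ ∑ i ∈ Icc 1 #B, L m i := by
  induction m with
  | zero =>
    intro _ B hB
    obtain rfl : B = ∅ := by simpa using hB
    simp
  | succ m ih =>
    intro hm B hB
    -- Row `0` is empty, so the interlacing condition extends vacuously to `m = 0`.
    have hint : Interlaces (m + 1) (L (m + 1)) (L m) := by
      rcases Nat.eq_zero_or_pos m with rfl | h0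
      · intro i h1 h2
        omega
      · exact hL.2 m h0 hm
    have hsub : ∀ C ⊆ B, m + 1 ∉ C → C ⊆ Icc 1 m := by
      intro C hC hnot i hi
      have h1 := mem_Icc.1 (hB (hC hi))
      have h2 : i ≠ m + 1 := fun h => hnot (h ▸ hi)
      exact mem_Icc.2 ⟨h1.1, by omega⟩
    by_cases hmem : m + 1 ∈ B
    · have hC := hsub (B.erase (m + 1)) (erase_subset _ _) (notMem_erase _ _)
      have hcard : #(B.erase (m + 1)) ≤ m := by simpa using card_le_card hC
      have h1 := ih (by omega) _ hC
      have h2 := rowSum_diff_le hint (m - #(B.erase (m + 1))) #(B.erase (m + 1)) (by omega)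
      have h3 := hw (m + 1) (by omega) hm
      rw [card_erase_add_one hmem] at h2
      have h4 := add_sum_erase B mu hmem
      simp only [rowSum, Nat.add_sub_cancel] at h3
      linarith
    · have hC := hsub B Subset.rfl hmem
      have hcard : #B ≤ m := by simpa using card_le_card hC
      refine (ih (by omega) B hC).trans (sum_le_sum fun i hi => ?_)
      have := mem_Icc.1 hi
      exact (hint i this.1 (by omega)).1

lemma rowSum_eq_sum_weight {n : ℕ} {L : ℕ → ℕ → ℝ} {mu : ℕ → ℝ}
    (hw : HasWeight n L mu) (m : ℕ) : m ≤ n → rowSum L m = ∑ i ∈ Icc 1 m, mu i := by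
  induction m with
  | zero => intro _; simp [rowSum]
  | succ m ih =>
    intro hm
    have h1 := ih (by omega)
    have h2 := hw (m + 1) (by omega) hm
    rw [sum_Icc_succ_top (by omega : 1 ≤ m + 1)]
    simp only [Nat.add_sub_cancel] at h2
    linarith

/-- The bounding sequence of a GT pattern majorizes its weight. -/
theorem stmt3 (n : ℕ) (L : ℕ → ℕ → ℝ) (mu : ℕ → ℝ)
    (hL : IsGTPattern n L) (hw : HasWeight n L mu) :
    Maj n (L n) mu := by
  refine ⟨fun B hB => ⟨Icc 1 #B, ?_, by simp, sum_weight_le hL hw n le_rfl B hB⟩,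
    rowSum_eq_sum_weight hw n le_rfl⟩
  exact Icc_subset_Icc_right (by simpa using card_le_card hB)
end

section
/- Let n ≥ 1 and let λ: λ_1 ≥ … ≥ λ_n and λ′: λ′_1 ≥ … ≥ λ′_{n−1} be non-increasing real sequences of lengths n and n−1 respectively that interlace. Then 2·▱(λ, λ′) = ||λ||^2 − ||λ′||^2 − ((λ_1 + … + λ_n) − (λ′_1 + … + λ′_{n−1}))^2. -/
/-!
The formula is a polynomial identity in the entries, proved by induction on the length.
Write `D = Σ λ - Σ λ'` for the pair of lengths `m + 1` and `m`, and let `b = λ'_{m+1}` and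
`c = λ_{m+2}` be the entries added in passing to lengths `m + 2` and `m + 1`. The area grows by
`(D - b) * (b - c)` (`trapArea_succ`), while `D` becomes `D - b + c`, and
`c² - b² - (D - b + c)² + D² = 2 * (D - b) * (b - c)`.
-/

open Finset

/-- Enlarging `n` by one adds to the trapezoidal area exactly the terms with `j = m + 1`. -/
lemma trapArea_succ (m : ℕ) (lam mu : ℕ → ℝ) :
    trapArea (m + 2) lam mu = trapArea (m + 1) lam mu +
      (∑ i ∈ Finset.Icc 1 (m + 1), lam i - ∑ i ∈ Finset.Icc 1 (m + 1), mu i) *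
        (mu (m + 1) - lam (m + 2)) := by
  have hcol : ∀ i ∈ Finset.Icc 1 m,
      ∑ j ∈ Finset.Icc i (m + 1), (lam i - mu i) * (mu j - lam (j + 1)) =
        ∑ j ∈ Finset.Icc i m, (lam i - mu i) * (mu j - lam (j + 1)) +
          (lam i - mu i) * (mu (m + 1) - lam (m + 2)) := by
    intro i hi
    have hi' := (Finset.mem_Icc.mp hi).2
    rw [Finset.sum_Icc_succ_top (by omega)]
  rw [← Finset.sum_sub_distrib, Finset.sum_mul, Finset.sum_Icc_succ_top (by omega)]
  simp only [trapArea, Nat.add_sub_cancel, show m + 2 - 1 = m + 1 by omega]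
  rw [Finset.sum_Icc_succ_top (by omega), Finset.sum_congr rfl hcol,
    Finset.sum_add_distrib, Finset.Icc_self, Finset.sum_singleton, add_assoc]

lemma two_mul_trapArea_succ (m : ℕ) (lam mu : ℕ → ℝ) :
    2 * trapArea (m + 1) lam mu =
      normSq (m + 1) lam - normSq m mu -
        ((∑ i ∈ Finset.Icc 1 (m + 1), lam i) - ∑ i ∈ Finset.Icc 1 m, mu i) ^ 2 := by
  induction m with
  | zero => simp [trapArea, normSq]
  | succ m ih =>
    rw [trapArea_succ, mul_add, ih]
    simp only [normSq]
    rw [Finset.sum_Icc_succ_top (b := m + 1) (f := lam) (by omega),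
      Finset.sum_Icc_succ_top (b := m + 1) (f := fun i => lam i ^ 2) (by omega),
      Finset.sum_Icc_succ_top (b := m) (f := mu) (by omega),
      Finset.sum_Icc_succ_top (b := m) (f := fun i => mu i ^ 2) (by omega)]
    ring

/-- For interlacing sequences `lam` (length `n`) and `lam'`
(length `n-1`): `2 ▱(lam, lam') = ‖lam‖² - ‖lam'‖² - (Σ lam - Σ lam')²`. -/
theorem stmt5 (n : ℕ) (hn : 1 ≤ n) (lam lam' : ℕ → ℝ)
    (hlam : NonIncr n lam) (hlam' : NonIncr (n - 1) lam')
    (hint : Interlaces n lam lam') :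
    2 * trapArea n lam lam' =
      normSq n lam - normSq (n - 1) lam' -
        ((∑ i ∈ Finset.Icc 1 n, lam i) - ∑ i ∈ Finset.Icc 1 (n - 1), lam' i) ^ 2 := by
  obtain ⟨m, rfl⟩ : ∃ m, n = m + 1 := ⟨n - 1, by omega⟩
  exact two_mul_trapArea_succ m lam lam'
end

section
/- Let λ: λ_1 ≥ … ≥ λ_n and λ′: λ′_1 ≥ … ≥ λ′_{n−1} be interlacing non-increasing real sequences. Suppose that (1) all entries of λ are integers, (2) λ′_1 + … + λ′_{n−1} is an integer, and (3) ▱(λ, λ′) = ▽(λ, λ′). Then all entries of λ′ are integers. -/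
/-!
By interlacing, every product `(λ_i - λ'_i)(λ'_j - λ_{j+1})` is nonnegative. The triangular area is
the diagonal part `i = j` of the trapezoidal area, so equality of the two areas makes every product
with `i < j` vanish (`cross_eq_zero`). Suppose `λ'_k` is not an integer. Then `λ'_k` differs from
both `λ_k` and `λ_{k+1}`, so `λ'_i = λ_i` for `i < k` and `λ'_j = λ_{j+1}` for `j > k`. Hence all
other entries of `λ'` are integers, and since the total sum is an integer so is `λ'_k`, a
contradiction.
-/

open Finset

/-- Equality of the two areas kills every off-diagonal term of the trapezoidal area. -/
theorem cross_eq_zero (n : ℕ) (lam mu : ℕ → ℝ) (hint : Interlaces n lam mu)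
    (h : trapArea n lam mu = triArea n lam mu) (i j : ℕ) (hi : 1 ≤ i) (hij : i < j)
    (hj : j ≤ n - 1) : (lam i - mu i) * (mu j - lam (j + 1)) = 0 := by
  have hnn : ∀ i j, 1 ≤ i → i ≤ j → j ≤ n - 1 →
      0 ≤ (lam i - mu i) * (mu j - lam (j + 1)) := fun i j hi hij hj =>
    mul_nonneg (sub_nonneg.2 (hint i hi (by omega)).1)
      (sub_nonneg.2 (hint j (by omega) (by omega)).2)
  have hzero : ∑ i ∈ Icc 1 (n - 1), ∑ j ∈ (Icc i (n - 1)).erase i,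
      (lam i - mu i) * (mu j - lam (j + 1)) = 0 := by
    have hsplit : trapArea n lam mu = triArea n lam mu +
        ∑ i ∈ Icc 1 (n - 1), ∑ j ∈ (Icc i (n - 1)).erase i,
          (lam i - mu i) * (mu j - lam (j + 1)) := by
      unfold trapArea triArea
      rw [← sum_add_distrib]
      refine sum_congr rfl fun i hi => ?_
      rw [add_sum_erase _ (fun j => (lam i - mu i) * (mu j - lam (j + 1)))
        (left_mem_Icc.2 (mem_Icc.1 hi).2)]
    linarith
  have hnn' : ∀ i ∈ Icc 1 (n - 1), ∀ j ∈ (Icc i (n - 1)).erase i,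
      0 ≤ (lam i - mu i) * (mu j - lam (j + 1)) := by
    intro i hi j hj
    simp only [mem_erase, mem_Icc] at hi hj
    exact hnn i j hi.1 hj.2.1 hj.2.2
  have hi' : i ∈ Icc 1 (n - 1) := mem_Icc.2 ⟨hi, by omega⟩
  have hinner := (sum_eq_zero_iff_of_nonneg fun i hi => sum_nonneg (hnn' i hi)).1 hzero i hi'
  exact (sum_eq_zero_iff_of_nonneg (hnn' i hi')).1 hinner j
    (mem_erase.2 ⟨by omega, mem_Icc.2 ⟨by omega, hj⟩⟩)

/-- If `lam` is integral, the sum of `lam'` is an integer, and the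
trapezoidal and triangular areas of the interlacing pair agree, then `lam'` is integral. -/
theorem stmt7 (n : ℕ) (lam lam' : ℕ → ℝ)
    (hlam : NonIncr n lam) (hlam' : NonIncr (n - 1) lam')
    (hint : Interlaces n lam lam')
    (h1 : IsIntegralSeq n lam)
    (h2 : ∃ z : ℤ, ∑ i ∈ Finset.Icc 1 (n - 1), lam' i = (z : ℝ))
    (h3 : trapArea n lam lam' = triArea n lam lam') :
    IsIntegralSeq (n - 1) lam' := by
  intro k hk1 hkn
  by_contra hk
  have hcross := cross_eq_zero n lam lam' hint h3
  have hne1 : lam k - lam' k ≠ 0 := fun h => by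
    obtain ⟨z, hz⟩ := h1 k hk1 (by omega)
    exact hk ⟨z, by linarith⟩
  have hne2 : lam' k - lam (k + 1) ≠ 0 := fun h => by
    obtain ⟨z, hz⟩ := h1 (k + 1) (by omega) (by omega)
    exact hk ⟨z, by linarith⟩
  have hothers : ∀ i ∈ (Icc 1 (n - 1)).erase k, ∃ z : ℤ, lam' i = (z : ℝ) := by
    intro i hi
    simp only [mem_erase, mem_Icc] at hi
    obtain ⟨hik, hi1, hin⟩ := hi
    rcases lt_or_gt_of_ne hik with hlt | hgt
    · have h := (mul_eq_zero.1 (hcross i k hi1 hlt hkn)).resolve_right hne2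
      obtain ⟨z, hz⟩ := h1 i hi1 (by omega)
      exact ⟨z, by linarith⟩
    · have h := (mul_eq_zero.1 (hcross k i hk1 hgt hin)).resolve_left hne1
      obtain ⟨z, hz⟩ := h1 (i + 1) (by omega) (by omega)
      exact ⟨z, by linarith⟩
  choose! f hf using hothers
  obtain ⟨z, hz⟩ := h2
  refine hk ⟨z - ∑ i ∈ (Icc 1 (n - 1)).erase k, f i, ?_⟩
  rw [← add_sum_erase _ lam' (mem_Icc.2 ⟨hk1, hkn⟩), sum_congr rfl hf] at hz
  push_cast
  linarith
end

section
/- Let λ: λ_1 ≥ … ≥ λ_n be a non-increasing sequence of integers, let μ ∈ ℤ^n be such that λ majorizes μ, and let P be a Gelfand–Tsetlin pattern (with real entries) with bounding sequence λ, weight μ, and triangular area equal to (1/2)(||λ||^2 − ||μ||^2). Then all entries of P are integers. -/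
/-!
For an interlacing pair `lam` (length `m + 1`), `mu` (length `m`) put `x i = lam i - mu i` and
`y i = mu i - lam (i + 1)`, all nonnegative, and let `a` be the difference of the two entry sums.
Then `‖lam‖² - ‖mu‖² - a² = 2 ∑_{i ≤ k} x i * y k` (`normSq_sub_normSq`): the right-hand side is
twice the trapezoidal area. It exceeds the triangular area `∑ x k * y k` by the nonnegative sum
`∑_{i < k} x i * y k`, called the excess here. Summed over the rows of a pattern, the left-hand side
telescopes, so the total excess is `(‖λ‖² - ‖μ‖²) / 2` minus the triangular area. The hypothesis on
the area therefore forces the excess of every pair of consecutive rows to vanish, i.e.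
`x i * y k = 0` whenever `i < k`.

In that situation at most one entry `mu k` of the shorter row is not an entry of the longer row: if
`x k ≠ 0` and `y k ≠ 0`, then `mu i = lam i` for `i < k` and `mu i = lam (i + 1)` for `i > k`.
If the longer row and the sum of the shorter row are integral, the possible exceptional entry is
integral too (`row_integral`). Integrality thus descends from the bounding sequence through all
rows, the row sums being integral because the weight is.
-/

open Finset

/-- The difference `∑_{i < k} (lam i - mu i) * (mu k - lam (k + 1))` between the trapezoidal and the
triangular area of a pair of lengths `m + 1` and `m`. -/
def excess (m : ℕ) (lam mu : ℕ → ℝ) : ℝ :=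
  ∑ k ∈ Finset.Icc 1 m, (∑ i ∈ Finset.Ico 1 k, (lam i - mu i)) * (mu k - lam (k + 1))

/-- The trapezoidal area, written as `triArea + excess`, is determined by the norms and the sums of
the two rows. No interlacing is needed. -/
lemma normSq_sub_normSq (m : ℕ) (lam mu : ℕ → ℝ) :
    2 * (triArea (m + 1) lam mu + excess m lam mu) =
      normSq (m + 1) lam - normSq m mu -
        (∑ i ∈ Finset.Icc 1 (m + 1), lam i - ∑ i ∈ Finset.Icc 1 m, mu i) ^ 2 := by
  induction m with
  | zero => simp [triArea, excess, normSq]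
  | succ m ih =>
    simp only [triArea, excess, normSq, Nat.add_sub_cancel] at ih ⊢
    have hX : ∑ i ∈ Finset.Ico 1 (m + 1), (lam i - mu i) =
        ∑ i ∈ Finset.Icc 1 m, lam i - ∑ i ∈ Finset.Icc 1 m, mu i := by
      rw [← Finset.sum_sub_distrib]
      rfl
    rw [Finset.sum_Icc_succ_top (by omega) (fun k => (lam k - mu k) * (mu k - lam (k + 1))),
      Finset.sum_Icc_succ_top (by omega)
        (fun k => (∑ i ∈ Finset.Ico 1 k, (lam i - mu i)) * (mu k - lam (k + 1))),
      Finset.sum_Icc_succ_top (b := m + 1) (by omega) (fun i => lam i ^ 2),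
      Finset.sum_Icc_succ_top (b := m) (by omega) (fun i => mu i ^ 2),
      Finset.sum_Icc_succ_top (b := m + 1) (by omega) lam,
      Finset.sum_Icc_succ_top (b := m) (by omega) mu, hX]
    rw [Finset.sum_Icc_succ_top (b := m) (by omega) lam] at ih ⊢
    linear_combination ih

lemma sum_diff_nonneg {m : ℕ} {lam mu : ℕ → ℝ} (h : Interlaces (m + 1) lam mu) {k : ℕ}
    (hk : k ≤ m) : 0 ≤ ∑ i ∈ Finset.Ico 1 k, (lam i - mu i) := by
  refine Finset.sum_nonneg fun i hi => ?_
  rw [Finset.mem_Ico] at hi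
  linarith [(h i hi.1 (by omega)).1]

lemma excess_term_nonneg {m : ℕ} {lam mu : ℕ → ℝ} (h : Interlaces (m + 1) lam mu) :
    ∀ k ∈ Finset.Icc 1 m,
      0 ≤ (∑ i ∈ Finset.Ico 1 k, (lam i - mu i)) * (mu k - lam (k + 1)) := by
  intro k hk
  rw [Finset.mem_Icc] at hk
  exact mul_nonneg (sum_diff_nonneg h hk.2) (by linarith [(h k hk.1 (by omega)).2])

lemma excess_nonneg {m : ℕ} {lam mu : ℕ → ℝ} (h : Interlaces (m + 1) lam mu) :
    0 ≤ excess m lam mu :=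
  Finset.sum_nonneg (excess_term_nonneg h)

lemma mul_eq_zero_of_excess_eq_zero {m : ℕ} {lam mu : ℕ → ℝ} (h : Interlaces (m + 1) lam mu)
    (h0 : excess m lam mu = 0) {i k : ℕ} (hi : 1 ≤ i) (hik : i < k) (hk : k ≤ m) :
    lam i = mu i ∨ mu k = lam (k + 1) := by
  have hz := (Finset.sum_eq_zero_iff_of_nonneg (excess_term_nonneg h)).1 h0 k
    (Finset.mem_Icc.2 ⟨by omega, hk⟩)
  rcases mul_eq_zero.1 hz with hz | hz
  · left
    have hn : ∀ j ∈ Finset.Ico 1 k, 0 ≤ lam j - mu j := by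
      intro j hj
      rw [Finset.mem_Ico] at hj
      linarith [(h j hj.1 (by omega)).1]
    exact sub_eq_zero.1 ((Finset.sum_eq_zero_iff_of_nonneg hn).1 hz i (Finset.mem_Ico.2 ⟨hi, hik⟩))
  · exact Or.inr (sub_eq_zero.1 hz)

lemma sum_integral (s : Finset ℕ) (f : ℕ → ℝ) (h : ∀ i ∈ s, ∃ z : ℤ, f i = z) :
    ∃ z : ℤ, ∑ i ∈ s, f i = z := by
  choose! g hg using h
  exact ⟨∑ i ∈ s, g i, by rw [Int.cast_sum]; exact Finset.sum_congr rfl hg⟩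

/-- A non-integral entry of the shorter row would be its only one, contradicting the integrality of
the row's sum. -/
lemma row_integral {m : ℕ} {lam mu : ℕ → ℝ} (h : Interlaces (m + 1) lam mu)
    (h0 : excess m lam mu = 0) (hlam : IsIntegralSeq (m + 1) lam)
    (hsum : ∃ z : ℤ, ∑ i ∈ Finset.Icc 1 m, mu i = z) : IsIntegralSeq m mu := by
  intro k hk1 hkm
  by_contra hk
  have hxk : lam k ≠ mu k := fun he => hk (he ▸ hlam k hk1 (by omega))
  have hyk : mu k ≠ lam (k + 1) := fun he => hk (he ▸ hlam (k + 1) (by omega) (by omega))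
  have hrest : ∃ z : ℤ, ∑ i ∈ (Finset.Icc 1 m).erase k, mu i = z := by
    refine sum_integral _ _ fun i hi => ?_
    rw [Finset.mem_erase, Finset.mem_Icc] at hi
    obtain ⟨hne, hi1, him⟩ := hi
    rcases lt_or_gt_of_ne hne with hlt | hgt
    · rw [← (mul_eq_zero_of_excess_eq_zero h h0 hi1 hlt hkm).resolve_right hyk]
      exact hlam i hi1 (by omega)
    · rw [(mul_eq_zero_of_excess_eq_zero h h0 hk1 hgt him).resolve_left hxk]
      exact hlam (i + 1) (by omega) (by omega)
  obtain ⟨a, ha⟩ := hsum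
  obtain ⟨b, hb⟩ := hrest
  have hsplit := Finset.add_sum_erase (Finset.Icc 1 m) mu (Finset.mem_Icc.2 ⟨hk1, hkm⟩)
  exact hk ⟨a - b, by push_cast; linarith⟩

/-- The row identity telescoped over rows `1, …, m + 1`. -/
lemma area_telescope (m : ℕ) (L : ℕ → ℕ → ℝ) (mu : ℕ → ℝ) (hw : HasWeight (m + 1) L mu) :
    2 * (patTriArea (m + 1) L + ∑ j ∈ Finset.Icc 1 m, excess j (L (j + 1)) (L j)) =
      normSq (m + 1) (L (m + 1)) - normSq (m + 1) mu := by
  induction m with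
  | zero =>
    have h1 := hw 1 le_rfl le_rfl
    simp [rowSum] at h1
    simp [patTriArea, normSq, h1]
  | succ m ih =>
    have ih := ih fun j h1 h2 => hw j h1 (by omega)
    have hrow := normSq_sub_normSq (m + 1) (L (m + 1 + 1)) (L (m + 1))
    have hwt : ∑ i ∈ Finset.Icc 1 (m + 1 + 1), L (m + 1 + 1) i
        - ∑ i ∈ Finset.Icc 1 (m + 1), L (m + 1) i = mu (m + 1 + 1) :=
      hw (m + 1 + 1) (by omega) le_rfl
    rw [hwt] at hrow
    have hmu : normSq (m + 1 + 1) mu = normSq (m + 1) mu + mu (m + 1 + 1) ^ 2 :=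
      Finset.sum_Icc_succ_top (by omega) _
    simp only [patTriArea, Nat.add_sub_cancel] at ih ⊢
    rw [Finset.sum_Icc_succ_top (by omega), Finset.sum_Icc_succ_top (by omega), hmu]
    linear_combination ih + hrow

/-- A GT pattern with integral bounding sequence `lam`, integral weight
`μ` (majorized by `lam`), and triangular area `(‖lam‖² - ‖μ‖²)/2` is integral. -/
theorem stmt8 (n : ℕ) (lam mu : ℕ → ℝ) (hlam : NonIncr n lam)
    (hlamInt : IsIntegralSeq n lam) (hmuInt : IsIntegralSeq n mu)
    (hmaj : Maj n lam mu)
    (L : ℕ → ℕ → ℝ) (hL : IsGTPattern n L) (hb : HasBounding n L lam)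
    (hw : HasWeight n L mu)
    (harea : patTriArea n L = (normSq n lam - normSq n mu) / 2) :
    ∀ j i, 1 ≤ i → i ≤ j → j ≤ n → ∃ z : ℤ, L j i = (z : ℝ) := by
  intro j i hi hij hjn
  obtain ⟨m, rfl⟩ : ∃ m, n = m + 1 := ⟨n - 1, by omega⟩
  have htel := area_telescope m L mu hw
  have hnorm : normSq (m + 1) (L (m + 1)) = normSq (m + 1) lam :=
    Finset.sum_congr rfl fun i hi => by
      rw [Finset.mem_Icc] at hi
      rw [hb i hi.1 hi.2]
  have hsum0 : ∑ j ∈ Finset.Icc 1 m, excess j (L (j + 1)) (L j) = 0 := by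
    rw [hnorm] at htel
    linarith
  have hex : ∀ j ∈ Finset.Icc 1 m, excess j (L (j + 1)) (L j) = 0 :=
    (Finset.sum_eq_zero_iff_of_nonneg fun j hj => by
      rw [Finset.mem_Icc] at hj
      exact excess_nonneg (hL.2 j hj.1 (by omega))).1 hsum0
  have hrows : ∀ j, 1 ≤ j → j ≤ m + 1 → IsIntegralSeq j (L j) := by
    intro j hj1 hjm
    induction hjm using Nat.decreasingInduction with
    | self =>
      intro i h1 h2
      rw [hb i h1 h2]
      exact hlamInt i h1 h2
    | of_succ j hjm ih =>
      have hup := ih (by omega)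
      refine row_integral (hL.2 j hj1 (by omega)) (hex j (Finset.mem_Icc.2 ⟨hj1, by omega⟩)) hup ?_
      obtain ⟨a, ha⟩ := sum_integral (Finset.Icc 1 (j + 1)) (L (j + 1)) fun i hi => by
        rw [Finset.mem_Icc] at hi
        exact hup i hi.1 hi.2
      obtain ⟨b, hb'⟩ := hmuInt (j + 1) (by omega) (by omega)
      have hwt : ∑ i ∈ Finset.Icc 1 (j + 1), L (j + 1) i - ∑ i ∈ Finset.Icc 1 j, L j i = mu (j + 1) :=
        hw (j + 1) (by omega) (by omega)
      exact ⟨a - b, by push_cast; linarith⟩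
  exact hrows j (by omega) hjn i hi hij
end

section
/- Let λ^n: λ^n_1 ≥ … ≥ λ^n_n be a non-increasing sequence of real numbers and let μ = (μ_1, …, μ_n) ∈ ℝ^n be such that λ^n majorizes μ. Let λ^{n−1} be the unique non-increasing real sequence of length n−1 such that: (1) λ^{n−1} interlaces λ^n; (2) Σλ^{n−1} = μ_1 + … + μ_{n−1}; and (3) λ^{n−1} majorizes κ^{n−1} whenever κ^n is a non-increasing real sequence with λ^n ⪰ κ^n, κ^n weakly interlaces κ^{n−1} ∈ ℝ^{n−1}, and Σκ^{n−1} = μ_1 + … + μ_{n−1}. Then: (a) λ^{n−1} has integer entries if λ^n and μ have integer entries; (b) ▱(λ^n, λ^{n−1}) = ▽(λ^n, λ^{n−1}); and (c) if κ^{n−1}: κ_1 ≥ … ≥ κ_{n−1} is a non-increasing real sequence that interlaces λ^n, satisfies Σκ^{n−1} = μ_1 + … + μ_{n−1}, and κ^{n−1} ≠ λ^{n−1}, then ▱(λ^n, κ^{n−1}) > ▽(λ^n, κ^{n−1}). -/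
/-!
Write `λ` for the long row and call a row `κ` interlacing `λ` *tight* if for all `i < j` either
`κ i = λ i` or `κ j = λ (j + 1)`. All products in the two areas are nonnegative, and the
trapezoidal area minus the triangular area is the sum of `(λ i - κ i) (κ j - λ (j + 1))` over
`i < j`; hence the two areas agree exactly when `κ` is tight (`trap_le_tri_iff_tight`).

* The distinguished row is tight (`tight_of_maximal`): otherwise, moving a small mass from an
  entry `j` to an entry `i < j` gives another interlacing row with the same sum whose `i`-th
  partial sum is larger, against the maximality in majorization order. This is (b).
* A tight row is determined by its sum (`tight_unique`), which gives (c).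
* In a tight row at most one entry differs from both its neighbours in `λ`, so integrality of `λ`
  and of the sum forces integrality of the row, which is (a).
-/

open Finset

/-! ### Sums over non-increasing sequences -/

lemma NonIncr.le_s10 {n : ℕ} {x : ℕ → ℝ} (h : NonIncr n x) {i j : ℕ} (hi : 1 ≤ i) (hij : i ≤ j)
    (hj : j ≤ n) : x j ≤ x i := by
  induction j, hij using Nat.le_induction with
  | base => exact le_rfl
  | succ k hk ih => exact (h k (by omega) hj).trans (ih (by omega))

lemma sum_le_sum_top {n : ℕ} {x : ℕ → ℝ} (h : NonIncr n x) (S : Finset ℕ)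
    (hS : S ⊆ Finset.Icc 1 n) : ∑ i ∈ S, x i ≤ ∑ i ∈ Finset.Icc 1 S.card, x i := by
  induction n generalizing S with
  | zero =>
    have : S = ∅ := by simpa using hS
    simp [this]
  | succ n ih =>
    have hn : NonIncr n x := fun i hi hin => h i hi (by omega)
    have hS' : S.erase (n + 1) ⊆ Finset.Icc 1 n := by
      intro a ha
      have h1 := Finset.mem_erase.1 ha
      have h2 := Finset.mem_Icc.1 (hS h1.2)
      exact Finset.mem_Icc.2 ⟨h2.1, by omega⟩
    have key := ih hn _ hS'
    by_cases hmem : n + 1 ∈ S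
    · have hc := Finset.card_erase_add_one hmem
      have hle : (S.erase (n + 1)).card ≤ n := by
        simpa using Finset.card_le_card hS'
      rw [← hc, Finset.sum_Icc_succ_top (by omega), ← Finset.sum_erase_add _ _ hmem]
      have := h.le_s10 (i := (S.erase (n + 1)).card + 1) (j := n + 1) (by omega) (by omega) le_rfl
      linarith
    · rwa [Finset.erase_eq_of_notMem hmem] at key

lemma sum_bottom_le_sum {n : ℕ} {x : ℕ → ℝ} (h : NonIncr n x) (S : Finset ℕ)
    (hS : S ⊆ Finset.Icc 1 n) :
    ∑ i ∈ Finset.Icc (n - S.card + 1) n, x i ≤ ∑ i ∈ S, x i := by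
  have h1 := sum_le_sum_top h (Finset.Icc 1 n \ S) Finset.sdiff_subset
  have h2 := Finset.sum_sdiff (f := x) hS
  have hc : (Finset.Icc 1 n \ S).card = n - S.card := by
    rw [Finset.card_sdiff_of_subset hS]; simp
  rw [hc] at h1
  have h3 : ∑ i ∈ Finset.Icc 1 (n - S.card), x i + ∑ i ∈ Finset.Icc (n - S.card + 1) n, x i
      = ∑ i ∈ Finset.Icc 1 n, x i := by
    rw [← Finset.sum_union]
    · congr 1
      ext a
      simp only [Finset.mem_union, Finset.mem_Icc]
      omega
    · rw [Finset.disjoint_left]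
      intro a
      simp only [Finset.mem_Icc]
      omega
  linarith

lemma Maj.refl (n : ℕ) (x : ℕ → ℝ) : Maj n x x :=
  ⟨fun B hB => ⟨B, hB, rfl, le_rfl⟩, rfl⟩

lemma Interlaces.weaklyInterlaces {n : ℕ} {lam kap : ℕ → ℝ} (hlam : NonIncr n lam)
    (h : Interlaces n lam kap) : WeaklyInterlaces n lam kap := by
  intro S hS _
  have hS1 : ∀ i ∈ S, 1 ≤ i ∧ i + 1 ≤ n := fun i hi => by
    have := Finset.mem_Icc.1 (hS hi)
    omega
  constructor
  · refine (Finset.sum_le_sum fun i hi => (h i (hS1 i hi).1 (hS1 i hi).2).1).trans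
      (sum_le_sum_top hlam S fun i hi => ?_)
    have := hS1 i hi
    exact Finset.mem_Icc.2 ⟨this.1, by omega⟩
  · -- The lower neighbours of the entries in `S` sit at the indices `S + 1`.
    have hb := sum_bottom_le_sum hlam (S.map (addRightEmbedding 1)) (by
      intro a ha
      obtain ⟨i, hi, rfl⟩ := Finset.mem_map.1 ha
      have := hS1 i hi
      simp only [addRightEmbedding_apply, Finset.mem_Icc]
      omega)
    rw [Finset.card_map, Finset.sum_map] at hb
    exact hb.trans (Finset.sum_le_sum fun i hi => (h i (hS1 i hi).1 (hS1 i hi).2).2)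

/-! ### Tight rows -/

/-- The row `kap` is tight for `lam` (of length `n`): whenever `i < j`, the entry `kap i` attains
its upper bound `lam i` or `kap j` attains its lower bound `lam (j + 1)`. -/
def Tight (n : ℕ) (lam kap : ℕ → ℝ) : Prop :=
  ∀ i j, 1 ≤ i → i < j → j + 1 ≤ n → kap i = lam i ∨ kap j = lam (j + 1)

lemma trapArea_eq_s10 (n : ℕ) (lam kap : ℕ → ℝ) :
    trapArea n lam kap = triArea n lam kap +
      ∑ i ∈ Finset.Icc 1 (n - 1), ∑ j ∈ Finset.Ioc i (n - 1),
        (lam i - kap i) * (kap j - lam (j + 1)) := by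
  unfold trapArea triArea
  rw [← Finset.sum_add_distrib]
  refine Finset.sum_congr rfl fun i hi => ?_
  rw [← Finset.Ioc_insert_left (Finset.mem_Icc.1 hi).2, Finset.sum_insert (by simp)]

/-- The two areas of an interlacing pair agree exactly for tight rows, and the trapezoidal one is
strictly larger otherwise. -/
lemma trap_le_tri_iff_tight {n : ℕ} {lam kap : ℕ → ℝ} (h : Interlaces n lam kap) :
    triArea n lam kap ≤ trapArea n lam kap ∧
      (trapArea n lam kap ≤ triArea n lam kap ↔ Tight n lam kap) := by
  have hnn : ∀ i ∈ Finset.Icc 1 (n - 1), ∀ j ∈ Finset.Ioc i (n - 1),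
      0 ≤ (lam i - kap i) * (kap j - lam (j + 1)) := by
    intro i hi j hj
    rw [Finset.mem_Icc] at hi
    rw [Finset.mem_Ioc] at hj
    exact mul_nonneg (sub_nonneg.2 (h i hi.1 (by omega)).1)
      (sub_nonneg.2 (h j (by omega) (by omega)).2)
  have hnn' := fun i hi => Finset.sum_nonneg (hnn i hi)
  have hpos := Finset.sum_nonneg hnn'
  rw [trapArea_eq_s10]
  refine ⟨by linarith, fun hle i j hi hij hj => ?_, fun ht => ?_⟩
  · have h0 := (Finset.sum_eq_zero_iff_of_nonneg hnn').1 (by linarith)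
    have hi' : i ∈ Finset.Icc 1 (n - 1) := Finset.mem_Icc.2 ⟨hi, by omega⟩
    have h1 := (Finset.sum_eq_zero_iff_of_nonneg (hnn i hi')).1 (h0 i hi') j
      (Finset.mem_Ioc.2 ⟨hij, by omega⟩)
    rcases mul_eq_zero.1 h1 with h2 | h2
    · left; linarith
    · right; linarith
  · have : ∑ i ∈ Finset.Icc 1 (n - 1), ∑ j ∈ Finset.Ioc i (n - 1),
        (lam i - kap i) * (kap j - lam (j + 1)) = 0 := by
      refine Finset.sum_eq_zero fun i hi => Finset.sum_eq_zero fun j hj => ?_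
      rw [Finset.mem_Icc] at hi
      rw [Finset.mem_Ioc] at hj
      rcases ht i j hi.1 hj.1 (by omega) with h2 | h2 <;> simp [h2]
    linarith

/-- A tight row is determined by its sum: two different rows with equal sums have an entry `i`
where the first is larger and an entry `j` where the second is larger, and tightness of one of
them is violated at the pair `i, j`, according to which index is smaller. -/
lemma tight_unique {n : ℕ} {lam x y : ℕ → ℝ} (hx : Interlaces n lam x) (hy : Interlaces n lam y)
    (tx : Tight n lam x) (ty : Tight n lam y)
    (hsum : ∑ i ∈ Finset.Icc 1 (n - 1), x i = ∑ i ∈ Finset.Icc 1 (n - 1), y i) :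
    ∀ i, 1 ≤ i → i ≤ n - 1 → x i = y i := by
  -- No pair of oppositely ordered entries exists.
  have key : ∀ i j, 1 ≤ i → i + 1 ≤ n → 1 ≤ j → j + 1 ≤ n → x i < y i → y j < x j → False := by
    intro i j hi hi' hj hj' h1 h2
    have a1 := hx i hi hi'
    have a2 := hx j hj hj'
    have b1 := hy i hi hi'
    have b2 := hy j hj hj'
    rcases lt_trichotomy i j with hij | rfl | hij
    · rcases tx i j hi hij hj' with h | h <;> linarith
    · linarith
    · rcases ty j i hj hij hi' with h | h <;> linarith
  intro i hi hin
  by_contra hne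
  have hi' : i ∈ Finset.Icc 1 (n - 1) := Finset.mem_Icc.2 ⟨hi, hin⟩
  have hb : ∀ {j}, j ∈ Finset.Icc 1 (n - 1) → 1 ≤ j ∧ j + 1 ≤ n := fun hj => by
    have := Finset.mem_Icc.1 hj
    omega
  rcases lt_or_gt_of_ne hne with hlt | hlt
  · refine (Finset.sum_lt_sum (fun j hj => ?_) ⟨i, hi', hlt⟩).ne hsum
    by_contra hc
    exact key i j hi (hb hi').2 (hb hj).1 (hb hj).2 hlt (not_le.1 hc)
  · refine (Finset.sum_lt_sum (fun j hj => ?_) ⟨i, hi', hlt⟩).ne hsum.symm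
    by_contra hc
    exact key j i (hb hj).1 (hb hj).2 hi (hb hi').2 (not_le.1 hc) hlt

/-- A row that majorizes every interlacing row with the same sum is tight. -/
lemma tight_of_maximal {n : ℕ} {lam lam' : ℕ → ℝ} (h1 : NonIncr (n - 1) lam')
    (h2 : Interlaces n lam lam')
    (hmax : ∀ kap : ℕ → ℝ, Interlaces n lam kap →
      (∑ i ∈ Finset.Icc 1 (n - 1), kap i = ∑ i ∈ Finset.Icc 1 (n - 1), lam' i) →
      Maj (n - 1) lam' kap) : Tight n lam lam' := by
  intro i j hi hij hj
  by_contra! hne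
  have hai := h2 i hi (by omega)
  have haj := h2 j (by omega) hj
  have hlt1 : lam' i < lam i := lt_of_le_of_ne hai.1 hne.1
  have hlt2 : lam (j + 1) < lam' j := lt_of_le_of_ne haj.2 (Ne.symm hne.2)
  -- The largest mass that can be moved from entry `j` to entry `i`.
  obtain ⟨e, he, he1, he2⟩ : ∃ e : ℝ, 0 < e ∧ e ≤ lam i - lam' i ∧ e ≤ lam' j - lam (j + 1) :=
    ⟨min (lam i - lam' i) (lam' j - lam (j + 1)),
      lt_min (by linarith) (by linarith), min_le_left _ _, min_le_right _ _⟩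
  have hm := hmax (fun k => lam' k + ((if k = i then e else 0) - (if k = j then e else 0)))
    (by
      intro k hk hkn
      have hak := h2 k hk hkn
      by_cases hki : k = i
      · subst hki
        have : k ≠ j := by omega
        simp only [this, if_true, if_false]
        constructor <;> linarith
      · by_cases hkj : k = j
        · subst hkj
          simp only [hki, if_true, if_false]
          constructor <;> linarith
        · simpa [hki, hkj] using hak)
    (by
      have hi' : i ∈ Finset.Icc 1 (n - 1) := Finset.mem_Icc.2 ⟨hi, by omega⟩
      have hj' : j ∈ Finset.Icc 1 (n - 1) := Finset.mem_Icc.2 ⟨by omega, by omega⟩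
      rw [Finset.sum_add_distrib, Finset.sum_sub_distrib, Finset.sum_ite_eq',
        Finset.sum_ite_eq', if_pos hi', if_pos hj']
      ring)
  obtain ⟨A, hA, hcard, hle⟩ := hm.1 (Finset.Icc 1 i) (Finset.Icc_subset_Icc_right (by omega))
  have htop := sum_le_sum_top h1 A hA
  have hcard' : A.card = i := by simpa using hcard
  rw [hcard'] at htop
  rw [Finset.sum_add_distrib, Finset.sum_sub_distrib, Finset.sum_ite_eq', Finset.sum_ite_eq',
    if_pos (Finset.mem_Icc.2 ⟨hi, le_rfl⟩),
    if_neg (fun h => by have := (Finset.mem_Icc.1 h).2; omega)] at hle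
  linarith

lemma exists_int_sum (s : Finset ℕ) (x : ℕ → ℝ) (h : ∀ i ∈ s, ∃ z : ℤ, x i = z) :
    ∃ z : ℤ, ∑ i ∈ s, x i = z := by
  choose! f hf using h
  exact ⟨∑ i ∈ s, f i, by rw [Finset.sum_congr rfl hf]; push_cast; rfl⟩

/-- An entry of a tight row either equals one of its two neighbours in `lam`, or all other entries
do, and then it is the difference of two integers. -/
lemma integral_of_tight {n : ℕ} {lam x : ℕ → ℝ} (tx : Tight n lam x) (hlam : IsIntegralSeq n lam)
    (hs : ∃ z : ℤ, ∑ i ∈ Finset.Icc 1 (n - 1), x i = z) : IsIntegralSeq (n - 1) x := by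
  intro i hi hin
  by_cases c1 : x i = lam i
  · rw [c1]; exact hlam i hi (by omega)
  by_cases c2 : x i = lam (i + 1)
  · rw [c2]; exact hlam (i + 1) (by omega) (by omega)
  have hi' : i ∈ Finset.Icc 1 (n - 1) := Finset.mem_Icc.2 ⟨hi, hin⟩
  obtain ⟨w, hw⟩ := exists_int_sum ((Finset.Icc 1 (n - 1)).erase i) x (by
    intro j hj
    have hj1 := (Finset.mem_erase.1 hj).1
    have hj2 := Finset.mem_Icc.1 (Finset.mem_erase.1 hj).2
    rcases lt_or_gt_of_ne hj1 with hlt | hlt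
    · rw [(tx j i hj2.1 hlt (by omega)).resolve_right c2]
      exact hlam j hj2.1 (by omega)
    · rw [(tx i j hi hlt (by omega)).resolve_left c1]
      exact hlam (j + 1) (by omega) (by omega))
  obtain ⟨z, hz⟩ := hs
  have := Finset.sum_erase_add _ x hi'
  exact ⟨z - w, by push_cast; linarith⟩

/-- Properties (a), (b), (c) of the distinguished row `λ^{n-1}`. -/
theorem stmt10 (n : ℕ) (lam mu lam' : ℕ → ℝ)
    (hlam : NonIncr n lam) (hmaj : Maj n lam mu)
    (h1 : NonIncr (n - 1) lam') (h2 : Interlaces n lam lam')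
    (h3 : ∑ i ∈ Finset.Icc 1 (n - 1), lam' i = ∑ i ∈ Finset.Icc 1 (n - 1), mu i)
    (h4 : ∀ kap kap' : ℕ → ℝ, NonIncr n kap → Maj n lam kap →
      WeaklyInterlaces n kap kap' →
      (∑ i ∈ Finset.Icc 1 (n - 1), kap' i = ∑ i ∈ Finset.Icc 1 (n - 1), mu i) →
      Maj (n - 1) lam' kap') :
    ((IsIntegralSeq n lam ∧ IsIntegralSeq n mu) → IsIntegralSeq (n - 1) lam') ∧
    trapArea n lam lam' = triArea n lam lam' ∧
    (∀ kap' : ℕ → ℝ, NonIncr (n - 1) kap' → Interlaces n lam kap' →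
      (∑ i ∈ Finset.Icc 1 (n - 1), kap' i = ∑ i ∈ Finset.Icc 1 (n - 1), mu i) →
      (∃ i, 1 ≤ i ∧ i ≤ n - 1 ∧ kap' i ≠ lam' i) →
      triArea n lam kap' < trapArea n lam kap') := by
  have hint : Tight n lam lam' := tight_of_maximal h1 h2 fun kap hk hs =>
    h4 lam kap hlam (Maj.refl n lam) (hk.weaklyInterlaces hlam) (hs.trans h3)
  have harea := trap_le_tri_iff_tight h2
  refine ⟨fun hI => integral_of_tight hint hI.1 ?_, le_antisymm (harea.2.2 hint) harea.1, ?_⟩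
  · rw [h3]
    refine exists_int_sum _ _ fun i hi => ?_
    rw [Finset.mem_Icc] at hi
    exact hI.2 i hi.1 (by omega)
  · rintro kap' - hk hs ⟨i, hi, hin, hne⟩
    by_contra hlt
    exact hne (tight_unique hk h2 ((trap_le_tri_iff_tight hk).2.1 (not_lt.1 hlt)) hint
      (hs.trans h3.symm) i hi hin)
end

section
/- Given a partition π: π_1 ≥ π_2 ≥ … (with the convention π_0 = ∞) and an integer c, let a be the largest non-negative integer such that π_a ≥ a − c, and put b := a − c. Then: (i) a ≥ c and b ≥ 0; (ii) π^1: π_1 − b ≥ … ≥ π_a − b is a partition with at most a parts; (iii) π^2: π_{a+1} ≥ π_{a+2} ≥ … is a partition whose largest part is at most b; (iv) |π| = ab + |π^1| + |π^2|; and (v) the association (c, π) ↦ (a, b; π^1, π^2) is injective, and as c ranges over all integers and π over all partitions, its image is exactly the set of tuples (a, b; π^1, π^2) where a, b are non-negative integers, π^1 is a partition with at most a parts, and π^2 is a partition with largest part at most b. -/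
/-! The set defining `a` contains `0` and is bounded above because the partition is eventually
zero, so its supremum is a genuine maximum (`aOf_spec`). Admissibility of `a` gives `π_a ≥ b`
when `a ≥ 1`, hence `π_j ≥ b` for `1 ≤ j ≤ a`; failure of `a + 1` gives `π_{a+1} ≤ a - c`, so
that `b ≥ 0` and every later part is at most `b`. Thus `π` is the `a × b` rectangle with `π¹` to
its right and `π²` below it, which yields the size formula by splitting the sum at `a`, and shows
that `π` and `c = a - b` are recovered from `(a, b; π¹, π²)`. Conversely, gluing `σ` and `τ` to an
`a × b` rectangle gives a partition (`glue`) whose associated data for `c = a - b` are the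
prescribed ones, by the characterisation of `a` as a maximum (`aOf_eq`). -/

open Finset

/-- A partition: a non-increasing, eventually-zero sequence of naturals indexed from `1`
(the value at `0` is irrelevant; the convention `π₀ = ∞` is handled separately). -/
def IsPartition (p : ℕ → ℕ) : Prop :=
  (∀ i, 1 ≤ i → p (i + 1) ≤ p i) ∧ ∃ N, ∀ i, N ≤ i → p i = 0

/-- The number of boxes `|π|` of a partition: the sum of its parts. -/
noncomputable def psize (p : ℕ → ℕ) : ℕ := ∑ᶠ i ∈ Set.Ici (1 : ℕ), p i

/-- The largest non-negative integer `a` such that `π_a ≥ a - c`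
(with the convention `π₀ = ∞`, so `a = 0` is always admissible). -/
noncomputable def aOf (p : ℕ → ℕ) (c : ℤ) : ℕ :=
  sSup {a : ℕ | a = 0 ∨ (a : ℤ) - c ≤ (p a : ℤ)}

/-- The partition `p` fits into the rectangle `(a, b)`: at most `a` parts, each ≤ `b`. -/
def FitsRect (p : ℕ → ℕ) (a b : ℤ) : Prop :=
  (∀ k : ℕ, a < (k : ℤ) → p k = 0) ∧ ∀ k : ℕ, 1 ≤ k → (p k : ℤ) ≤ b

/-- `x` (indexed by `1, …, n`) majorizes `y` (integer version): every `k`-element partial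
sum of `y` is dominated by some `k`-element partial sum of `x` (equivalently, partial sums
of the non-increasing rearrangements are ordered), and the total sums agree. -/
def MajZ (n : ℕ) (x y : ℕ → ℤ) : Prop :=
  (∀ B : Finset ℕ, B ⊆ Finset.Icc 1 n →
    ∃ A : Finset ℕ, A ⊆ Finset.Icc 1 n ∧ A.card = B.card ∧
      ∑ i ∈ B, y i ≤ ∑ i ∈ A, x i) ∧
  ∑ i ∈ Finset.Icc 1 n, x i = ∑ i ∈ Finset.Icc 1 n, y i

/-- `η'` (length `s`, with `η'_2 ≥ … ≥ η'_s`) nearly interlaces `η` (length `s + 1`):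
no condition if `s = 1`; if `s ≥ 2` then `η_1 ≥ η'_1`, `η'_s ≥ η_{s+1}`, and
`(η'_2, …, η'_{s-1})` interlaces `(η_2, …, η_s)`. -/
def NearlyInterlaces (s : ℕ) (η η' : ℕ → ℤ) : Prop :=
  (∀ i, 2 ≤ i → i + 1 ≤ s → η' (i + 1) ≤ η' i) ∧
  (2 ≤ s → η' 1 ≤ η 1 ∧ η (s + 1) ≤ η' s ∧
    ∀ i, 2 ≤ i → i + 1 ≤ s → η' i ≤ η i ∧ η (i + 1) ≤ η' i)

/-- The partitions `P 1, …, P s` approximately overlay the nearly interlacing pair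
`η`, `η'`: no condition if `s = 1`; if `s ≥ 2` then `P 1` has at most `η 1 - η' 1` parts,
`P s` has largest part at most `η' s - η (s+1)`, and `P j` fits into the rectangle
`(η j - η' j, η' j - η (j+1))` for `2 ≤ j ≤ s - 1`. -/
def ApproxOverlay (s : ℕ) (η η' : ℕ → ℤ) (P : ℕ → ℕ → ℕ) : Prop :=
  2 ≤ s →
    (∀ k : ℕ, η 1 - η' 1 < (k : ℤ) → P 1 k = 0) ∧
    (∀ k : ℕ, 1 ≤ k → (P s k : ℤ) ≤ η' s - η (s + 1)) ∧
    ∀ j, 2 ≤ j → j + 1 ≤ s → FitsRect (P j) (η j - η' j) (η' j - η (j + 1))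

/-- The proper trapezoidal area `□^prop(η, η') = Σ_{1 ≤ i < j ≤ s} (η_i - η'_i)(η'_j - η_{j+1})`. -/
def propTrap (s : ℕ) (η η' : ℕ → ℤ) : ℤ :=
  ∑ i ∈ Finset.Icc 1 s, ∑ j ∈ Finset.Icc (i + 1) s, (η i - η' i) * (η' j - η (j + 1))

/-- The sequence `a_j` of §3.1.2 of the paper, for the data `(μ, π)` and `η`:
`a_0 = 0` and `a_j = aOf π (μ - η_{j+1})` (the relevant `c_j` being `μ - η_{j+1}`). -/
noncomputable def Aseq (p : ℕ → ℕ) (η : ℕ → ℤ) (μ : ℤ) (j : ℕ) : ℕ :=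
  if j = 0 then 0 else aOf p (μ - η (j + 1))

/-- The sequence `b_j = a_j - c_j`. -/
noncomputable def Bseq (p : ℕ → ℕ) (η : ℕ → ℤ) (μ : ℤ) (j : ℕ) : ℤ :=
  (Aseq p η μ j : ℤ) - (μ - η (j + 1))

/-- The sequence `η'` produced by the map `ξ_η` applied to `(μ, π)`. -/
noncomputable def xiRow (s : ℕ) (η : ℕ → ℤ) (μ : ℤ) (p : ℕ → ℕ) (j : ℕ) : ℤ :=
  if s = 1 then (if j = 1 then η 1 + η 2 - μ else 0)
  else if j = s then η (s + 1) + Bseq p η μ (s - 1)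
  else η j - ((Aseq p η μ j : ℤ) - (Aseq p η μ (j - 1) : ℤ))

/-- The partitions `π^1, …, π^s` produced by the map `ξ_η` applied to `(μ, π)`:
`xiParts s η μ p j` is the partition `π^j`, whose `k`-th part is `π_{a_{j-1}+k} - b_j`
for `1 ≤ k ≤ a_j - a_{j-1}` (`1 ≤ j ≤ s - 1`), while `π^s` is `π_{a_{s-1}+1}, π_{a_{s-1}+2}, …`. -/
noncomputable def xiParts (s : ℕ) (η : ℕ → ℤ) (μ : ℤ) (p : ℕ → ℕ) (j k : ℕ) : ℕ :=
  if s = 1 then (if j = 1 then p k else 0)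
  else if j = s then p (Aseq p η μ (s - 1) + k)
  else if 1 ≤ k ∧ k ≤ Aseq p η μ j - Aseq p η μ (j - 1) then
    p (Aseq p η μ (j - 1) + k) - (Bseq p η μ j).toNat
  else 0

/-- The shift by `k` of a sequence of length `s + 1`: the first entry increases by `2k`,
entries `2, …, s` increase by `k`, the last entry is unchanged; for a sequence of
length `1` (i.e. `s = 0`) the single entry increases by `k`. -/
def shiftSeq (s : ℕ) (k : ℤ) (η : ℕ → ℤ) (j : ℕ) : ℤ :=
  if s = 0 then (if j = 1 then η 1 + k else η j)
  else if j = 1 then η 1 + 2 * k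
  else if j ≤ s then η j + k
  else η j

/-- `b := a - c` (a natural number, since `a ≥ c`). -/
noncomputable def durfB (p : ℕ → ℕ) (c : ℤ) : ℕ := ((aOf p c : ℤ) - c).toNat

/-- The partition `π^1 : π_1 - b ≥ … ≥ π_a - b`. -/
noncomputable def durfP1 (p : ℕ → ℕ) (c : ℤ) (j : ℕ) : ℕ :=
  if 1 ≤ j ∧ j ≤ aOf p c then p j - durfB p c else 0

/-- The partition `π^2 : π_{a+1} ≥ π_{a+2} ≥ …`. -/
noncomputable def durfP2 (p : ℕ → ℕ) (c : ℤ) (j : ℕ) : ℕ := p (aOf p c + j)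

lemma aOf_spec {p : ℕ → ℕ} (hp : IsPartition p) (c : ℤ) :
    (aOf p c = 0 ∨ (aOf p c : ℤ) - c ≤ (p (aOf p c) : ℤ)) ∧
      ∀ k, aOf p c < k → (p k : ℤ) < (k : ℤ) - c := by
  obtain ⟨N, hN⟩ := hp.2
  have hbdd : BddAbove {a : ℕ | a = 0 ∨ (a : ℤ) - c ≤ (p a : ℤ)} := by
    -- beyond `N` the parts vanish, so admissibility forces the index to be at most `c`
    refine ⟨N + c.toNat, ?_⟩
    rintro k (rfl | hk)
    · omega
    · by_contra hlt
      have := hN k (by omega)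
      omega
  constructor
  · exact Nat.sSup_mem (s := {a : ℕ | a = 0 ∨ (a : ℤ) - c ≤ (p a : ℤ)}) ⟨0, Or.inl rfl⟩ hbdd
  · intro k hk
    by_contra hle
    have : k ≤ aOf p c := le_csSup hbdd (Or.inr (by omega))
    omega

lemma aOf_eq {p : ℕ → ℕ} {c : ℤ} {a : ℕ} (h : a = 0 ∨ (a : ℤ) - c ≤ (p a : ℤ))
    (h' : ∀ k, a < k → (p k : ℤ) < (k : ℤ) - c) : aOf p c = a := by
  refine IsGreatest.csSup_eq ⟨h, ?_⟩
  rintro k (rfl | hk)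
  · omega
  · by_contra hlt
    have := h' k (by omega)
    omega

lemma IsPartition.anti {p : ℕ → ℕ} (hp : IsPartition p) {i j : ℕ} (hi : 1 ≤ i) (hij : i ≤ j) :
    p j ≤ p i := by
  induction j, hij using Nat.le_induction with
  | base => exact le_rfl
  | succ k hk ih => exact (hp.1 k (hi.trans hk)).trans ih

lemma psize_eq_sum_range {p : ℕ → ℕ} {N : ℕ} (hN : ∀ i, N < i → p i = 0) :
    psize p = ∑ i ∈ range N, p (i + 1) := by
  have h : psize p = ∑ i ∈ Icc 1 N, p i := by
    refine finsum_mem_eq_sum_of_inter_support_eq _ ?_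
    ext i
    simp only [Set.mem_inter_iff, Set.mem_Ici, Function.mem_support, coe_Icc, Set.mem_Icc]
    constructor
    · rintro ⟨h1, h2⟩
      exact ⟨⟨h1, not_lt.1 fun h => h2 (hN i h)⟩, h2⟩
    · rintro ⟨⟨h1, _⟩, h2⟩
      exact ⟨h1, h2⟩
  rw [h, sum_bij' (fun i _ => i - 1) (fun i _ => i + 1)] <;> simp <;> grind

/-- The partition formed by an `a × b` rectangle with `σ` placed to its right and `τ` below. -/
def glue (a b : ℕ) (σ τ : ℕ → ℕ) (j : ℕ) : ℕ := if j ≤ a then σ j + b else τ (j - a)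

lemma isPartition_glue {a b : ℕ} {σ τ : ℕ → ℕ} (hσ : IsPartition σ) (hτ : IsPartition τ)
    (hb : ∀ j, 1 ≤ j → τ j ≤ b) : IsPartition (glue a b σ τ) := by
  constructor
  · intro i hi
    unfold glue
    split_ifs with h1 h2 h2
    · have := hσ.1 i hi
      omega
    · omega
    · have := hb (i + 1 - a) (by omega)
      omega
    · have := hτ.1 (i - a) (by omega)
      rwa [show i + 1 - a = i - a + 1 by omega]
  · obtain ⟨N, hN⟩ := hτ.2
    refine ⟨a + 1 + N, fun i hi => ?_⟩
    rw [glue, if_neg (by omega)]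
    exact hN _ (by omega)

/-- The generalized Durfee-square decomposition `(c, π) ↦ (a, b; π¹, π²)`:
properties (i)–(iv), and (v) injectivity together with the description of the image. -/
theorem stmt12 (p : ℕ → ℕ) (hp : IsPartition p) (c : ℤ) :
    (c ≤ (aOf p c : ℤ) ∧ (durfB p c : ℤ) = (aOf p c : ℤ) - c) ∧
    (IsPartition (durfP1 p c) ∧ ∀ j, aOf p c < j → durfP1 p c j = 0) ∧
    (IsPartition (durfP2 p c) ∧ ∀ j, 1 ≤ j → durfP2 p c j ≤ durfB p c) ∧
    psize p = aOf p c * durfB p c + psize (durfP1 p c) + psize (durfP2 p c) ∧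
    ((∀ (c' : ℤ) (p' : ℕ → ℕ), IsPartition p' →
        aOf p' c' = aOf p c → durfB p' c' = durfB p c →
        (∀ j, 1 ≤ j → durfP1 p' c' j = durfP1 p c j) →
        (∀ j, 1 ≤ j → durfP2 p' c' j = durfP2 p c j) →
        c' = c ∧ ∀ j, 1 ≤ j → p' j = p j) ∧
      (∀ (a b : ℕ) (σ τ : ℕ → ℕ), IsPartition σ → (∀ j, a < j → σ j = 0) →
        IsPartition τ → (∀ j, 1 ≤ j → τ j ≤ b) →
        ∃ (c' : ℤ) (p' : ℕ → ℕ), IsPartition p' ∧ aOf p' c' = a ∧ durfB p' c' = b ∧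
          (∀ j, 1 ≤ j → durfP1 p' c' j = σ j) ∧
          (∀ j, 1 ≤ j → durfP2 p' c' j = τ j))) := by
  obtain ⟨hmem, hmax⟩ := aOf_spec hp c
  have hnext := hmax (aOf p c + 1) (by omega)
  have hca : c ≤ (aOf p c : ℤ) := by omega
  have hB : (durfB p c : ℤ) = (aOf p c : ℤ) - c := by unfold durfB; omega
  have hge : ∀ {p : ℕ → ℕ} {c : ℤ}, IsPartition p → ∀ j, 1 ≤ j → j ≤ aOf p c →
      durfB p c ≤ p j := by
    intro p c hp j hj hja
    have h1 := hp.anti hj hja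
    have h2 := (aOf_spec hp c).1
    unfold durfB
    omega
  obtain ⟨N, hN⟩ := hp.2
  have hP1 : ∀ j, aOf p c < j → durfP1 p c j = 0 := fun j hj => if_neg (by omega)
  refine ⟨⟨hca, hB⟩, ⟨⟨?_, aOf p c + 1, fun i hi => hP1 i hi⟩, hP1⟩,
    ⟨⟨?_, N, fun i hi => hN _ (by omega)⟩, ?_⟩, ?_, ?_, ?_⟩
  · intro i hi
    have := hp.1 i hi
    unfold durfP1
    split_ifs <;> omega
  · intro i hi
    exact hp.1 (aOf p c + i) (by omega)
  · intro j hj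
    have h := hp.anti (i := aOf p c + 1) (j := aOf p c + j) (by omega) (by omega)
    unfold durfP2
    omega
  · rw [psize_eq_sum_range (p := p) (N := aOf p c + N) (fun i hi => hN i (by omega)),
      psize_eq_sum_range hP1,
      psize_eq_sum_range (p := durfP2 p c) (N := N) (fun i hi => hN _ (by omega)),
      sum_range_add]
    congr 1
    have h : ∀ i ∈ range (aOf p c), p (i + 1) = durfB p c + durfP1 p c (i + 1) := by
      intro i hi
      rw [mem_range] at hi
      have := hge hp (i + 1) (by omega) hi
      rw [durfP1, if_pos (by omega)]
      omega
    rw [sum_congr rfl h, sum_add_distrib, sum_const, card_range, smul_eq_mul]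
  · intro c' p' hp' ha hb h1 h2
    have hnext' := (aOf_spec hp' c').2 (aOf p' c' + 1) (by omega)
    have hB' : (durfB p' c' : ℤ) = (aOf p' c' : ℤ) - c' := by unfold durfB; omega
    refine ⟨by omega, fun j hj => ?_⟩
    by_cases hja : j ≤ aOf p c
    · have h := h1 j hj
      have e := hge hp j hj hja
      have e' := hge (c := c') hp' j hj (by omega)
      rw [durfP1, durfP1, if_pos ⟨hj, ha ▸ hja⟩, if_pos ⟨hj, hja⟩] at h
      omega
    · have h := h2 (j - aOf p c) (by omega)
      rw [durfP2, durfP2, ha] at h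
      rwa [show aOf p c + (j - aOf p c) = j by omega] at h
  · intro a b σ τ hσ hσa hτ hτb
    have ha : aOf (glue a b σ τ) ((a : ℤ) - b) = a := by
      apply aOf_eq
      · right
        rw [glue, if_pos le_rfl]
        omega
      · intro k hk
        have := hτb (k - a) (by omega)
        rw [glue, if_neg (by omega)]
        omega
    have hb : durfB (glue a b σ τ) ((a : ℤ) - b) = b := by
      rw [durfB, ha]
      omega
    refine ⟨(a : ℤ) - b, glue a b σ τ, isPartition_glue hσ hτ hτb, ha, hb, ?_, ?_⟩
    · intro j hj
      rw [durfP1, ha, hb]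
      split_ifs with h
      · rw [glue, if_pos h.2, Nat.add_sub_cancel]
      · exact (hσa j (by omega)).symm
    · intro j hj
      rw [durfP2, ha, glue, if_neg (by omega), Nat.add_sub_cancel_left]
end

section
/- Fix an integer s ≥ 1, an integer sequence η: η_1, …, η_{s+1} with η_2 ≥ … ≥ η_s, and an integer k. Let η̂ denote the shift by k of η. For μ an integer and π a partition, if ξ_η(μ, π) = (η′; π^1, …, π^s), then ξ_{η̂}(μ + k, π) = (η̂′; π^1, …, π^s), where η̂′ is the shift by k of η′. -/
/-!
For `s = 1` the claim is the identity `(η₁ + 2k) + η₂ - (μ + k) = (η₁ + η₂ - μ) + k`.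
For `s ≥ 2`, each `c_j = μ - η_{j+1}` with `1 ≤ j ≤ s - 1` is unchanged when `μ` and the middle
entries `η₂, …, η_s` all increase by `k`. Since `a_j` and `b_j` depend only on `c_j` and `π`, they
are unchanged (`Aseq_shift`, `Bseq_shift`), and so are the partitions `π^j`; moreover `η'_j - η_j`
for `j < s` and `η'_s - η_{s+1}` are unchanged, so `η'` is shifted as `η` is.
-/

open Finset

/-- The numbers `c_j = μ - η_{j+1}`, `1 ≤ j ≤ s - 1`, only involve the middle entries of `η`,
which shift by the same `k` as `μ`; hence the `a_j` are invariant. -/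
lemma Aseq_shift {s j : ℕ} (η : ℕ → ℤ) (k μ : ℤ) (p : ℕ → ℕ) (hj : j + 1 ≤ s) :
    Aseq p (shiftSeq s k η) (μ + k) j = Aseq p η μ j := by
  rcases Nat.eq_zero_or_pos j with rfl | h0
  · simp [Aseq]
  · have h : shiftSeq s k η (j + 1) = η (j + 1) + k := by
      simp [shiftSeq, hj, show s ≠ 0 by omega, show j ≠ 0 by omega]
    simp [Aseq, h]

lemma Bseq_shift {s j : ℕ} (η : ℕ → ℤ) (k μ : ℤ) (p : ℕ → ℕ) (h0 : 1 ≤ j) (hj : j + 1 ≤ s) :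
    Bseq p (shiftSeq s k η) (μ + k) j = Bseq p η μ j := by
  have h : shiftSeq s k η (j + 1) = η (j + 1) + k := by
    simp [shiftSeq, hj, show s ≠ 0 by omega, show j ≠ 0 by omega]
  simp [Bseq, Aseq_shift η k μ p hj, h]

/-- The map `ξ` is compatible with shifting:
`ξ_{η̂}(μ + k, π)` is the shift by `k` of `ξ_η(μ, π)` (with the same partitions). -/
theorem stmt16 (s : ℕ) (hs : 1 ≤ s) (η : ℕ → ℤ)
    (hη : ∀ i, 2 ≤ i → i + 1 ≤ s → η (i + 1) ≤ η i)
    (k μ : ℤ) (p : ℕ → ℕ) (hp : IsPartition p) :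
    (∀ i, 1 ≤ i → i ≤ s →
        xiRow s (shiftSeq s k η) (μ + k) p i = shiftSeq (s - 1) k (xiRow s η μ p) i) ∧
    (∀ j, 1 ≤ j → j ≤ s → ∀ m, 1 ≤ m →
        xiParts s (shiftSeq s k η) (μ + k) p j m = xiParts s η μ p j m) := by
  rcases eq_or_ne s 1 with rfl | h1
  · constructor
    · intro i hi hi'
      obtain rfl : i = 1 := by omega
      simp [xiRow, shiftSeq]
      ring
    · intro j _ _ m _
      simp [xiParts]
  · constructor
    · intro i hi hi'
      rcases eq_or_ne i s with rfl | his
      · simp [xiRow, shiftSeq, h1, Bseq_shift η k μ p (show 1 ≤ i - 1 by omega)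
          (show i - 1 + 1 ≤ i by omega), show i ≠ 0 by omega, show i - 1 ≠ 0 by omega,
          show ¬ i ≤ i - 1 by omega]
      · have hA := Aseq_shift η k μ p (show i + 1 ≤ s by omega)
        have hA' := Aseq_shift η k μ p (show i - 1 + 1 ≤ s by omega)
        simp only [xiRow, h1, his, if_false, hA, hA']
        by_cases hi1 : i = 1
        · subst hi1
          simp [xiRow, shiftSeq, show s ≠ 0 by omega, show s - 1 ≠ 0 by omega, h1, his]
          ring
        · simp [xiRow, shiftSeq, show s ≠ 0 by omega, show s - 1 ≠ 0 by omega, h1, his, hi1, hi',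
            show i ≤ s - 1 by omega]
          ring
    · intro j hj hj' m _
      have hA' := Aseq_shift η k μ p (show j - 1 + 1 ≤ s by omega)
      rcases eq_or_ne j s with rfl | hjs
      · simp [xiParts, h1, hA']
      · simp only [xiParts, h1, hjs, if_false, hA', Aseq_shift η k μ p (show j + 1 ≤ s by omega),
          Bseq_shift η k μ p hj (show j + 1 ≤ s by omega)]
end
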